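/- arXiv:1512.02614 — 2 statements merged into one kernel-verified Lean document; each statement's English description precedes it below -/
import Mathlib

section
/- For |α| ≤ 1/2, the supremum over x > 0 of x·(J_α(x)² + Y_α(x)²) equals 2/π; in particular sup_{x>0} 2x|J_α(x)Y_α(x)| ≤ 2/π. -/
open Real MeasureTheory

/-- Bessel function of the first kind of real order `α`, defined by its power series
(with `rpow` powers, intended for `x > 0`). -/
noncomputable def besselJ (α x : ℝ) : ℝ :=
  ∑' k : ℕ, ((-1 : ℝ) ^ k / (k.factorial * Real.Gamma (k + α + 1))) * (x / 2) ^ (2 * (k : ℝ) + α)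

/-- Bessel function of the second kind of real order `α`, defined by Schläfli's integral
representation (valid for `x > 0`). -/
noncomputable def besselY (α x : ℝ) : ℝ :=
  (1 / π) * (∫ θ in (0 : ℝ)..π, Real.sin (x * Real.sin θ - α * θ)) -
    (1 / π) * ∫ t in Set.Ioi (0 : ℝ),
      (Real.exp (α * t) + Real.exp (-α * t) * Real.cos (α * π)) * Real.exp (-x * Real.sinh t)

open Filter Topology

/-- A continuous function dominated by a decaying exponential is integrable on a half-line. -/
theorem integrableOn_Ioi_of_norm_le_exp {f : ℝ → ℂ} (hf : Continuous f) {C c : ℝ} (hc : 0 < c)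
    (hb : ∀ t, 0 ≤ t → ‖f t‖ ≤ C * Real.exp (-c * t)) : IntegrableOn f (Set.Ioi 0) := by
  refine Integrable.mono' ((exp_neg_integrableOn_Ioi 0 hc).const_mul C)
    hf.aestronglyMeasurable ?_
  filter_upwards [ae_restrict_mem measurableSet_Ioi] with t ht
  exact hb t (le_of_lt ht)

/-- Moving the half-line of integration of an entire function vertically, inside a half-strip on
which the function decays exponentially. -/
theorem integral_Ioi_sub_integral_Ioi_add_mul_I {f : ℂ → ℂ} (hf : Differentiable ℂ f)
    {h C c : ℝ} (hc : 0 < c)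
    (hb : ∀ t : ℝ, 0 ≤ t → ∀ θ ∈ Set.uIcc 0 h, ‖f (t + θ * Complex.I)‖ ≤ C * Real.exp (-c * t)) :
    (∫ t in Set.Ioi (0 : ℝ), f t) - ∫ t in Set.Ioi (0 : ℝ), f (t + h * Complex.I) =
      Complex.I * ∫ θ in (0 : ℝ)..h, f (θ * Complex.I) := by
  have hfc := hf.continuous
  have i0 : IntegrableOn (fun t : ℝ => f t) (Set.Ioi 0) :=
    integrableOn_Ioi_of_norm_le_exp (by fun_prop) hc fun t ht => by
      simpa using hb t ht 0 Set.left_mem_uIcc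
  have ih : IntegrableOn (fun t : ℝ => f (t + h * Complex.I)) (Set.Ioi 0) :=
    integrableOn_Ioi_of_norm_le_exp (by fun_prop) hc fun t ht => hb t ht h Set.right_mem_uIcc
  have l0 := intervalIntegral_tendsto_integral_Ioi 0 i0 tendsto_id
  have lh := intervalIntegral_tendsto_integral_Ioi 0 ih tendsto_id
  have hexp : Tendsto (fun T : ℝ => C * Real.exp (-c * T) * |h - 0|) atTop (𝓝 0) := by
    have : Tendsto (fun T : ℝ => Real.exp (-c * T)) atTop (𝓝 0) :=
      Real.tendsto_exp_atBot.comp (tendsto_id.const_mul_atTop_of_neg (neg_lt_zero.mpr hc))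
    simpa using (this.const_mul C).mul_const |h - 0|
  have lv : Tendsto (fun T : ℝ => ∫ θ in (0 : ℝ)..h, f (T + θ * Complex.I)) atTop (𝓝 0) := by
    refine squeeze_zero_norm' ?_ hexp
    filter_upwards [eventually_ge_atTop 0] with T hT
    exact intervalIntegral.norm_integral_le_of_norm_le_const fun θ hθ =>
      hb T hT θ (Set.uIoc_subset_uIcc hθ)
  have key : ∀ T : ℝ, (∫ t in (0 : ℝ)..T, f t) - (∫ t in (0 : ℝ)..T, f (t + h * Complex.I)) +
      Complex.I * (∫ θ in (0 : ℝ)..h, f (T + θ * Complex.I)) =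
      Complex.I * ∫ θ in (0 : ℝ)..h, f (θ * Complex.I) := fun T => by
    have := Complex.integral_boundary_rect_eq_zero_of_differentiableOn f 0 (T + h * Complex.I)
      hf.differentiableOn
    simpa [sub_eq_zero] using this
  have := ((l0.sub lh).add (lv.const_mul Complex.I)).congr fun T => key T
  simpa using tendsto_nhds_unique this tendsto_const_nhds

theorem exists_mul_sub_le_mul_exp (m : ℝ) {r : ℝ} (hr : 0 < r) :
    ∃ C, ∀ t, 0 ≤ t → m * t - C ≤ r * Real.exp t := by
  set n := |m| + 1 with hn
  have hn0 : 0 < n := by positivity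
  refine ⟨-n * (1 + Real.log (r / n)), fun t ht => ?_⟩
  have h1 := Real.add_one_le_exp (t + Real.log (r / n))
  rw [Real.exp_add, Real.exp_log (by positivity)] at h1
  have h2 : n * (Real.exp t * (r / n)) = r * Real.exp t := by field_simp
  have h3 : m * t ≤ n * t := by gcongr; linarith [le_abs_self m]
  nlinarith

theorem exists_exp_neg_mul_sinh_le {c : ℝ} (hc : 0 < c) (β : ℝ) :
    ∃ C, ∀ t, 0 ≤ t → Real.exp (-(c * Real.sinh t) - β * t) ≤ C * Real.exp (-1 * t) := by
  obtain ⟨C, hC⟩ := exists_mul_sub_le_mul_exp (1 - β) (half_pos hc)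
  refine ⟨Real.exp (C + c / 2), fun t ht => ?_⟩
  rw [← Real.exp_add]
  gcongr
  have h1 := hC t ht
  have h2 : Real.exp (-t) ≤ 1 := by simpa using ht
  rw [Real.sinh_eq]
  nlinarith

/-- Substitution `v = x sinh p` in an integral over the line. -/
theorem integral_comp_mul_sinh {x : ℝ} (hx : 0 < x) (g : ℝ → ℝ) :
    ∫ p, (x * Real.cosh p) * g (x * Real.sinh p) = ∫ v, g v := by
  have hd : ∀ p ∈ Set.univ, HasDerivWithinAt (fun p => x * Real.sinh p) (x * Real.cosh p)
      Set.univ p := fun p _ => ((Real.hasDerivAt_sinh p).const_mul x).hasDerivWithinAt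
  have hi : Set.InjOn (fun p => x * Real.sinh p) Set.univ := fun a _ b _ hab =>
    Real.sinh_injective (mul_left_cancel₀ hx.ne' hab)
  have hs : Set.image (fun p => x * Real.sinh p) Set.univ = Set.univ := by
    rw [Set.image_univ, Set.range_eq_univ]
    intro v
    exact ⟨Real.arsinh (v / x), by simp [Real.sinh_arsinh]; field_simp⟩
  have := integral_image_eq_integral_abs_deriv_smul MeasurableSet.univ hd hi g
  rw [hs, setIntegral_univ, setIntegral_univ] at this
  rw [this]
  congr with p
  rw [abs_of_pos (by have := Real.cosh_pos p; positivity), smul_eq_mul]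

theorem integrable_comp_mul_sinh {x : ℝ} (hx : 0 < x) {g : ℝ → ℝ} (hg : Integrable g) :
    Integrable fun p => (x * Real.cosh p) * g (x * Real.sinh p) := by
  have hd : ∀ p ∈ Set.univ, HasDerivWithinAt (fun p => x * Real.sinh p) (x * Real.cosh p)
      Set.univ p := fun p _ => ((Real.hasDerivAt_sinh p).const_mul x).hasDerivWithinAt
  have hi : Set.InjOn (fun p => x * Real.sinh p) Set.univ := fun a _ b _ hab =>
    Real.sinh_injective (mul_left_cancel₀ hx.ne' hab)
  have := (integrableOn_image_iff_integrableOn_abs_deriv_smul MeasurableSet.univ hd hi g).1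
    hg.integrableOn
  rw [integrableOn_univ] at this
  refine this.congr (.of_forall fun p => ?_)
  simp only [smul_eq_mul]
  rw [abs_of_pos (by have := Real.cosh_pos p; positivity)]

theorem integrable_inv_cosh : Integrable fun q => (Real.cosh q)⁻¹ := by
  refine (integrable_comp_mul_sinh one_pos integrable_inv_one_add_sq).congr
    (.of_forall fun q => ?_)
  have := Real.cosh_pos q
  have h := Real.cosh_sq' q
  simp only [one_mul, ← h]
  field_simp

theorem integral_inv_cosh : ∫ q, (Real.cosh q)⁻¹ = π := by
  rw [← integral_univ_inv_one_add_sq, ← integral_comp_mul_sinh one_pos fun v => (1 + v ^ 2)⁻¹]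
  congr with q
  have := Real.cosh_pos q
  have h := Real.cosh_sq' q
  simp only [one_mul, ← h]
  field_simp

theorem integrable_of_Ioi_of_comp_neg_Ioi {f : ℝ → ℂ} (h₁ : IntegrableOn f (Set.Ioi 0))
    (h₂ : IntegrableOn (fun t => f (-t)) (Set.Ioi 0)) : Integrable f := by
  rw [← integrableOn_univ, ← Set.Iic_union_Ioi (a := (0 : ℝ)), integrableOn_union]
  refine ⟨?_, h₁⟩
  rw [integrableOn_Iic_iff_integrableOn_Iio]
  have h₃ : IntegrableOn (fun t => f (-t)) (Set.Ioi (-0)) := by simpa using h₂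
  simpa only [neg_neg] using h₃.comp_neg_Iio

theorem integral_eq_integral_Ioi_add_comp_neg {f : ℝ → ℂ} (hf : Integrable f) :
    ∫ t, f t = (∫ t in Set.Ioi 0, f t) + ∫ t in Set.Ioi 0, f (-t) := by
  rw [integral_comp_neg_Ioi, neg_zero, add_comm]
  exact (intervalIntegral.integral_Iic_add_Ioi hf.integrableOn hf.integrableOn).symm

/-- Twice the Macdonald function of order `α`, given by its integral over the whole line. -/
noncomputable def twoBesselK (α : ℝ) (z : ℂ) : ℂ :=
  ∫ t : ℝ, Complex.exp (-z * Complex.cosh t - α * t)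

/-- Twice the Macdonald function of order zero on the positive half-line. -/
noncomputable def twoBesselKZero (r : ℝ) : ℝ :=
  ∫ q : ℝ, Real.exp (-r * Real.cosh q)

theorem norm_exp_neg_mul_cosh (z : ℂ) (β t θ : ℝ) :
    ‖Complex.exp (-z * Complex.cosh (t + θ * Complex.I) - β * (t + θ * Complex.I))‖ =
      Real.exp (-(z.re * Real.cosh t * Real.cos θ - z.im * Real.sinh t * Real.sin θ) - β * t) := by
  rw [Complex.norm_exp, Complex.cosh_add, Complex.cosh_mul_I, Complex.sinh_mul_I,
    ← Complex.ofReal_cosh, ← Complex.ofReal_sinh, ← Complex.ofReal_cos, ← Complex.ofReal_sin]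
  congr 1
  simp [-Complex.ofReal_cosh, -Complex.ofReal_sinh,
    -Complex.ofReal_cos, -Complex.ofReal_sin]
  ring

theorem integrableOn_exp_neg_mul_cosh {z : ℂ} (hz : 0 < z.re) (β : ℝ) :
    IntegrableOn (fun t : ℝ => Complex.exp (-z * Complex.cosh t - β * t)) (Set.Ioi 0) := by
  obtain ⟨C, hC⟩ := exists_exp_neg_mul_sinh_le hz β
  refine integrableOn_Ioi_of_norm_le_exp (by fun_prop) one_pos fun t ht => le_trans ?_ (hC t ht)
  have := norm_exp_neg_mul_cosh z β t 0
  simp only [Complex.ofReal_zero, zero_mul, add_zero, Real.cos_zero, mul_one, Real.sin_zero,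
    mul_zero, sub_zero] at this
  rw [this]
  gcongr
  exact (Real.sinh_lt_cosh t).le

theorem integrable_exp_neg_mul_cosh {z : ℂ} (hz : 0 < z.re) (β : ℝ) :
    Integrable fun t : ℝ => Complex.exp (-z * Complex.cosh t - β * t) := by
  refine integrable_of_Ioi_of_comp_neg_Ioi (integrableOn_exp_neg_mul_cosh hz β) ?_
  simpa using integrableOn_exp_neg_mul_cosh hz (-β)

theorem integrable_real_exp_neg_mul_cosh {r : ℝ} (hr : 0 < r) :
    Integrable fun q : ℝ => Real.exp (-r * Real.cosh q) := by
  have := (integrable_exp_neg_mul_cosh (z := r) (by simpa using hr) 0).norm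
  refine this.congr (.of_forall fun t => ?_)
  have := norm_exp_neg_mul_cosh r 0 t 0
  simpa using this

/-- The integral of `exp (-‖ζ‖ cosh w)` over a horizontal line at height `-arg ζ` does not depend
on the height. -/
theorem integral_exp_neg_re_mul_cosh_add_im_mul_sinh {ζ : ℂ} (hζ : 0 < ζ.re) :
    ∫ q : ℝ, Complex.exp (-(ζ.re * Complex.cosh q) + Complex.I * ζ.im * Complex.sinh q) =
      twoBesselKZero ‖ζ‖ := by
  set R := ‖ζ‖ with hR
  set η := ζ.arg with hη
  have hcos : R * Real.cos η = ζ.re := Complex.norm_mul_cos_arg ζ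
  have hsin : R * Real.sin η = ζ.im := Complex.norm_mul_sin_arg ζ
  have hηlt : |η| < π / 2 := Complex.abs_arg_lt_pi_div_two_iff.2 (.inl hζ)
  have hR0 : 0 ≤ R := norm_nonneg _
  set f : ℂ → ℂ := fun w => Complex.exp (-R * Complex.cosh w) with hf
  have hfd : Differentiable ℂ f := by fun_prop
  have hfe : ∀ w, f (-w) = f w := fun w => by simp [hf]
  have hb : ∀ h : ℝ, |h| = |η| → ∀ t : ℝ, 0 ≤ t → ∀ θ ∈ Set.uIcc 0 h,
      ‖f (t + θ * Complex.I)‖ ≤ 1 * Real.exp (-ζ.re * t) := by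
    intro h hh t ht θ hθ
    have := norm_exp_neg_mul_cosh R 0 t θ
    simp only [Complex.ofReal_zero, zero_mul, sub_zero, Complex.ofReal_re,
      Complex.ofReal_im] at this
    rw [hf, this, one_mul, ← hcos]
    have h1 : |θ| ≤ |η| := by
      rw [← hh]; simpa using Set.abs_sub_left_of_mem_uIcc hθ
    have h2 : Real.cos η ≤ Real.cos θ := by
      rw [← Real.cos_abs η, ← Real.cos_abs θ]
      exact Real.cos_le_cos_of_nonneg_of_le_pi (abs_nonneg _) (by linarith [Real.pi_pos]) h1
    have h3 : t ≤ Real.cosh t := (Real.self_le_sinh_iff.2 ht).trans (Real.sinh_lt_cosh t).le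
    have h4 : R * Real.cos η * t ≤ R * Real.cosh t * Real.cos θ := by
      calc R * Real.cos η * t ≤ R * Real.cos η * Real.cosh t := by
            gcongr; rw [hcos]; exact hζ.le
        _ ≤ R * Real.cos θ * Real.cosh t := by gcongr
        _ = _ := by ring
    gcongr
    linarith
  have e1 := integral_Ioi_sub_integral_Ioi_add_mul_I hfd hζ (hb (-η) (abs_neg _))
  have e2 := integral_Ioi_sub_integral_Ioi_add_mul_I hfd hζ (hb η rfl)
  have e3 : (∫ θ in (0 : ℝ)..(-η), f (θ * Complex.I)) = -∫ θ in (0 : ℝ)..η, f (θ * Complex.I) := by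
    have := intervalIntegral.integral_comp_neg (a := 0) (b := η) fun θ : ℝ => f (θ * Complex.I)
    rw [neg_zero] at this
    rw [intervalIntegral.integral_symm, ← this, neg_inj]
    exact intervalIntegral.integral_congr fun θ _ => by
      simp only [Complex.ofReal_neg, neg_mul, hfe]
  have hfun : ∀ q : ℝ, Complex.exp (-(ζ.re * Complex.cosh q) + Complex.I * ζ.im * Complex.sinh q) =
      f (q + (-η : ℝ) * Complex.I) := fun q => by
    rw [hf, ← hcos, ← hsin]
    simp only [Complex.cosh_add, Complex.cosh_mul_I, Complex.sinh_mul_I]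
    congr 1
    push_cast
    simp only [Complex.cos_neg, Complex.sin_neg]
    ring
  have hc : Continuous f := hfd.continuous
  have j1 : IntegrableOn (fun t : ℝ => f (t + (-η : ℝ) * Complex.I)) (Set.Ioi 0) :=
    integrableOn_Ioi_of_norm_le_exp (by fun_prop) hζ
      fun t ht => hb (-η) (abs_neg _) t ht _ Set.right_mem_uIcc
  have hn : ∀ t : ℝ, f ((-t : ℝ) + (-η : ℝ) * Complex.I) = f (t + η * Complex.I) := fun t => by
    rw [← hfe]; congr 1; push_cast; ring
  have j2 : IntegrableOn (fun t : ℝ => f ((-t : ℝ) + (-η : ℝ) * Complex.I)) (Set.Ioi 0) := by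
    simp only [hn]
    exact integrableOn_Ioi_of_norm_le_exp (by fun_prop) hζ
      fun t ht => hb η rfl t ht _ Set.right_mem_uIcc
  have j0 : IntegrableOn (fun t : ℝ => f t) (Set.Ioi 0) :=
    integrableOn_Ioi_of_norm_le_exp (C := 1) (by fun_prop) hζ fun t ht => by
      simpa using hb η rfl t ht 0 Set.left_mem_uIcc
  have hn0 : ∀ t : ℝ, f (-t : ℝ) = f t := fun t => by rw [← hfe]; simp
  have hK : (twoBesselKZero R : ℂ) = ∫ q : ℝ, f q := by
    rw [twoBesselKZero, ← integral_complex_ofReal]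
    congr with q
    simp [hf]
  simp only [hfun]
  rw [hK, integral_eq_integral_Ioi_add_comp_neg (integrable_of_Ioi_of_comp_neg_Ioi j1 j2),
    integral_eq_integral_Ioi_add_comp_neg
      (integrable_of_Ioi_of_comp_neg_Ioi j0 (by simpa only [hn0] using j0))]
  simp only [hn, hn0]
  rw [e3] at e1
  linear_combination -e1 - e2

theorem twoBesselKZero_le {r s : ℝ} (hr : 0 < r) (hrs : r ≤ s) :
    twoBesselKZero s ≤ twoBesselKZero r := by
  refine integral_mono (integrable_real_exp_neg_mul_cosh (hr.trans_le hrs))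
    (integrable_real_exp_neg_mul_cosh hr) fun q => ?_
  have := (Real.cosh_pos q).le
  dsimp only
  gcongr

theorem twoBesselKZero_nonneg (r : ℝ) : 0 ≤ twoBesselKZero r :=
  integral_nonneg fun _ => (Real.exp_pos _).le

theorem continuousAt_twoBesselKZero {r : ℝ} (hr : 0 < r) : ContinuousAt twoBesselKZero r := by
  refine continuousAt_of_dominated (bound := fun q => Real.exp (-(r / 2) * Real.cosh q))
    (.of_forall fun s => by fun_prop) ?_ (integrable_real_exp_neg_mul_cosh (half_pos hr))
    (.of_forall fun q => by fun_prop)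
  filter_upwards [eventually_gt_nhds (half_lt_self hr)] with s hs
  refine .of_forall fun q => ?_
  rw [Real.norm_of_nonneg (Real.exp_pos _).le]
  have := (Real.cosh_pos q).le
  gcongr

theorem integral_exp_neg_mul_abs {c : ℝ} (hc : 0 < c) :
    ∫ v : ℝ, Real.exp (-c * |v|) = 2 * c⁻¹ := by
  have := integral_comp_abs (f := fun v => Real.exp (-c * v))
  rw [this, integral_exp_mul_Ioi (neg_lt_zero.2 hc)]
  simp [neg_div]

theorem integrable_exp_neg_mul_abs {c : ℝ} (hc : 0 < c) :
    Integrable fun v : ℝ => Real.exp (-c * |v|) := by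
  by_contra h
  have := integral_undef h
  rw [integral_exp_neg_mul_abs hc] at this
  have : 0 < 2 * c⁻¹ := by positivity
  linarith

theorem integrable_prod_exp_neg_abs_mul_cosh :
    Integrable (fun y : ℝ × ℝ => Real.exp (-(2 * |y.1|) * Real.cosh y.2))
      (volume.prod volume) := by
  have e : ∀ v q : ℝ, -(2 * |v|) * Real.cosh q = -(2 * Real.cosh q) * |v| := fun v q => by ring
  have hpos : ∀ q : ℝ, 0 < 2 * Real.cosh q := fun q => by have := Real.cosh_pos q; positivity
  rw [integrable_prod_iff' (Continuous.aestronglyMeasurable (by fun_prop))]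
  refine ⟨.of_forall fun q => ?_, ?_⟩
  · simpa only [e] using integrable_exp_neg_mul_abs (hpos q)
  · refine integrable_inv_cosh.congr (.of_forall fun q => ?_)
    simp only [Real.norm_of_nonneg (Real.exp_pos _).le, e]
    rw [integral_exp_neg_mul_abs (hpos q)]
    have := Real.cosh_pos q
    field_simp

theorem integrable_twoBesselKZero_abs : Integrable fun v : ℝ => twoBesselKZero (2 * |v|) :=
  integrable_prod_exp_neg_abs_mul_cosh.integral_prod_left

theorem integral_twoBesselKZero_abs : ∫ v : ℝ, twoBesselKZero (2 * |v|) = π := by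
  have e : ∀ v q : ℝ, -(2 * |v|) * Real.cosh q = -(2 * Real.cosh q) * |v| := fun v q => by ring
  have hpos : ∀ q : ℝ, 0 < 2 * Real.cosh q := fun q => by have := Real.cosh_pos q; positivity
  simp only [twoBesselKZero]
  rw [integral_integral_swap integrable_prod_exp_neg_abs_mul_cosh, ← integral_inv_cosh]
  congr with q
  simp only [e]
  rw [integral_exp_neg_mul_abs (hpos q)]
  have := Real.cosh_pos q
  field_simp

/-- The linear map `(p, q) ↦ (p + q, p - q)` of the plane. -/
noncomputable def addSubCLM : ℝ × ℝ →L[ℝ] ℝ × ℝ :=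
  (Matrix.toLin (Module.Basis.finTwoProd ℝ) (Module.Basis.finTwoProd ℝ)
    !![1, 1; 1, -1]).toContinuousLinearMap

theorem addSubCLM_apply (y : ℝ × ℝ) : addSubCLM y = (y.1 + y.2, y.1 - y.2) := by
  simp [addSubCLM, Matrix.toLin_finTwoProd_apply, sub_eq_add_neg]

theorem det_addSubCLM : addSubCLM.det = -2 := by
  rw [addSubCLM, LinearMap.det_toContinuousLinearMap, LinearMap.det_toLin, Matrix.det_fin_two_of]
  norm_num

theorem injOn_addSubCLM : Set.InjOn addSubCLM Set.univ := fun y _ y' _ h => by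
  simp only [addSubCLM_apply, Prod.mk.injEq] at h
  ext <;> linarith [h.1, h.2]

theorem image_addSubCLM : Set.image addSubCLM Set.univ = Set.univ := by
  rw [Set.image_univ, Set.range_eq_univ]
  intro y
  refine ⟨((y.1 + y.2) / 2, (y.1 - y.2) / 2), ?_⟩
  rw [addSubCLM_apply]
  ext <;> ring

theorem integral_comp_add_sub (g : ℝ × ℝ → ℂ) :
    ∫ y, g y = 2 * ∫ y : ℝ × ℝ, g (y.1 + y.2, y.1 - y.2) := by
  have := integral_image_eq_integral_abs_det_fderiv_smul volume MeasurableSet.univ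
    (fun y _ => addSubCLM.hasFDerivAt.hasFDerivWithinAt) injOn_addSubCLM g
  rw [image_addSubCLM, setIntegral_univ, setIntegral_univ] at this
  rw [this, integral_smul]
  simp [det_addSubCLM, addSubCLM_apply]

theorem integrable_comp_add_sub {g : ℝ × ℝ → ℂ} (hg : Integrable g) :
    Integrable fun y : ℝ × ℝ => g (y.1 + y.2, y.1 - y.2) := by
  have := (integrableOn_image_iff_integrableOn_abs_det_fderiv_smul volume MeasurableSet.univ
    (fun y _ => addSubCLM.hasFDerivAt.hasFDerivWithinAt) injOn_addSubCLM g).1 hg.integrableOn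
  rw [integrableOn_univ] at this
  refine (this.smul (2⁻¹ : ℝ)).congr (.of_forall fun y => ?_)
  simp [det_addSubCLM, addSubCLM_apply]

theorem twoBesselK_conj (α : ℝ) (z : ℂ) :
    twoBesselK α (starRingEnd ℂ z) = starRingEnd ℂ (twoBesselK α z) := by
  rw [twoBesselK, twoBesselK, ← integral_conj]
  congr with t
  rw [← Complex.exp_conj]
  simp [← Complex.cosh_conj]

/-- The product formula behind Nicholson's integral. -/
theorem norm_twoBesselK_sq (α : ℝ) {a : ℝ} (ha : 0 < a) (b : ℝ) :
    ‖twoBesselK α (a - b * Complex.I)‖ ^ 2 =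
      2 * ∫ p : ℝ, Real.exp (-(2 * α) * p) *
        twoBesselKZero ‖(⟨2 * a * Real.cosh p, 2 * b * Real.sinh p⟩ : ℂ)‖ := by
  set z : ℂ := a - b * Complex.I with hz
  set z' : ℂ := a + b * Complex.I with hz'
  have hzc : starRingEnd ℂ z = z' := by simp [hz, hz']
  have i1 := integrable_exp_neg_mul_cosh (z := z) (by simpa [hz] using ha) α
  have i2 := integrable_exp_neg_mul_cosh (z := z') (by simpa [hz'] using ha) α
  have i3 := integrable_comp_add_sub (i1.mul_prod i2)
  have hsplit : ∀ p q : ℝ,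
      Complex.exp (-z * Complex.cosh ((p + q : ℝ) : ℂ) - α * ((p + q : ℝ) : ℂ)) *
        Complex.exp (-z' * Complex.cosh ((p - q : ℝ) : ℂ) - α * ((p - q : ℝ) : ℂ)) =
      (Real.exp (-(2 * α) * p) : ℂ) * Complex.exp (-((2 * a * Real.cosh p : ℝ) * Complex.cosh q) +
        Complex.I * (2 * b * Real.sinh p : ℝ) * Complex.sinh q) := fun p q => by
    rw [← Complex.exp_add]
    push_cast
    rw [← Complex.exp_add, Complex.cosh_add, Complex.cosh_sub]
    congr 1
    rw [hz, hz']
    ring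
  have hpos : ∀ p : ℝ, 0 < 2 * a * Real.cosh p := fun p => by
    have := Real.cosh_pos p; positivity
  have hinner : ∀ p : ℝ, ∫ q : ℝ,
      Complex.exp (-((2 * a * Real.cosh p : ℝ) * Complex.cosh q) +
        Complex.I * (2 * b * Real.sinh p : ℝ) * Complex.sinh q) =
      twoBesselKZero ‖(⟨2 * a * Real.cosh p, 2 * b * Real.sinh p⟩ : ℂ)‖ := fun p =>
    integral_exp_neg_re_mul_cosh_add_im_mul_sinh
      (ζ := ⟨2 * a * Real.cosh p, 2 * b * Real.sinh p⟩) (hpos p)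
  have hmain : twoBesselK α z * twoBesselK α z' = ((2 * ∫ p : ℝ, Real.exp (-(2 * α) * p) *
        twoBesselKZero ‖(⟨2 * a * Real.cosh p, 2 * b * Real.sinh p⟩ : ℂ)‖ : ℝ) : ℂ) := by
    have h1 := integral_prod_mul (μ := (volume : Measure ℝ)) (ν := (volume : Measure ℝ))
      (fun t : ℝ => Complex.exp (-z * Complex.cosh t - α * t))
      (fun t : ℝ => Complex.exp (-z' * Complex.cosh t - α * t))
    rw [twoBesselK, twoBesselK, ← h1, ← Measure.volume_eq_prod, integral_comp_add_sub,
      Measure.volume_eq_prod, integral_prod _ i3]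
    rw [Complex.ofReal_mul, Complex.ofReal_ofNat, ← integral_complex_ofReal]
    congr 2 with p
    simp only [hsplit]
    rw [integral_const_mul, hinner, ← Complex.ofReal_mul]
  rw [← hzc, twoBesselK_conj, Complex.mul_conj'] at hmain
  exact_mod_cast hmain

theorem integrable_cosh_mul_twoBesselKZero {x : ℝ} (hx : 0 < x) :
    Integrable fun p : ℝ => Real.cosh p * twoBesselKZero (2 * x * |Real.sinh p|) := by
  refine ((integrable_comp_mul_sinh hx integrable_twoBesselKZero_abs).const_mul x⁻¹).congr
    (.of_forall fun p => ?_)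
  simp only [abs_mul, abs_of_pos hx]
  rw [← mul_assoc 2 x]
  field_simp

theorem exp_mul_le_two_mul_cosh {β : ℝ} (hβ : |β| ≤ 1) (p : ℝ) :
    Real.exp (β * p) ≤ 2 * Real.cosh p := by
  have h1 : β * p ≤ |p| := (le_abs_self _).trans <| by
    rw [abs_mul]; exact mul_le_of_le_one_left (abs_nonneg _) hβ
  calc Real.exp (β * p) ≤ Real.exp |p| := Real.exp_le_exp.2 h1
    _ ≤ 2 * Real.cosh |p| := by
      rw [Real.cosh_eq]; linarith [Real.exp_pos (-|p|)]
    _ = _ := by rw [Real.cosh_abs]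

theorem integrable_exp_mul_twoBesselKZero {β : ℝ} (hβ : |β| ≤ 1) {x : ℝ} (hx : 0 < x) :
    Integrable fun p : ℝ => Real.exp (β * p) * twoBesselKZero (2 * x * |Real.sinh p|) := by
  have hm : AEStronglyMeasurable
      (fun p : ℝ => twoBesselKZero (2 * x * |Real.sinh p|)) volume := by
    refine ((integrable_cosh_mul_twoBesselKZero hx).aestronglyMeasurable.mul
      (g := fun p => (Real.cosh p)⁻¹)
      (Continuous.aestronglyMeasurable ?_)).congr (.of_forall fun p => ?_)
    · exact Real.continuous_cosh.inv₀ fun p => (Real.cosh_pos p).ne'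
    · have := Real.cosh_pos p
      simp only [Pi.mul_apply]
      field_simp
  refine ((integrable_cosh_mul_twoBesselKZero hx).const_mul 2).mono'
    (AEStronglyMeasurable.mul (Continuous.aestronglyMeasurable (by fun_prop)) hm)
    (.of_forall fun p => ?_)
  rw [Real.norm_of_nonneg (mul_nonneg (Real.exp_pos _).le (twoBesselKZero_nonneg _)), ← mul_assoc]
  exact mul_le_mul_of_nonneg_right (exp_mul_le_two_mul_cosh hβ p) (twoBesselKZero_nonneg _)

/-- Boundary behaviour of the product formula at the imaginary axis. -/
theorem tendsto_norm_twoBesselK_sq {α : ℝ} (hα : |α| ≤ 1 / 2) {x : ℝ} (hx : 0 < x) :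
    Tendsto (fun ε : ℝ => ‖twoBesselK α (ε - x * Complex.I)‖ ^ 2) (𝓝[>] 0)
      (𝓝 (2 * ∫ p : ℝ, Real.exp (-(2 * α) * p) * twoBesselKZero (2 * x * |Real.sinh p|))) := by
  have h2α : |-(2 * α)| ≤ 1 := by rw [abs_neg, abs_mul, abs_two]; linarith
  have hnorm : ∀ ε p : ℝ, 2 * x * |Real.sinh p| ≤
      ‖(⟨2 * ε * Real.cosh p, 2 * x * Real.sinh p⟩ : ℂ)‖ := fun ε p => by
    have := Complex.abs_im_le_norm ⟨2 * ε * Real.cosh p, 2 * x * Real.sinh p⟩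
    simpa [abs_mul, abs_of_pos hx] using this
  have hae : ∀ᵐ p : ℝ, p ≠ 0 := by simp [ae_iff]
  have hcont : Continuous fun y : ℝ × ℝ =>
      ‖(⟨2 * y.1 * Real.cosh y.2, 2 * x * Real.sinh y.2⟩ : ℂ)‖ := by
    have : ∀ y : ℝ × ℝ, (⟨2 * y.1 * Real.cosh y.2, 2 * x * Real.sinh y.2⟩ : ℂ) =
      ((2 * y.1 * Real.cosh y.2 : ℝ) : ℂ) + (2 * x * Real.sinh y.2 : ℝ) * Complex.I := fun y => by
        rw [← Complex.mk_eq_add_mul_I]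
    simp only [this]
    fun_prop
  have hlim : Tendsto (fun ε : ℝ => ∫ p : ℝ, Real.exp (-(2 * α) * p) *
      twoBesselKZero ‖(⟨2 * ε * Real.cosh p, 2 * x * Real.sinh p⟩ : ℂ)‖) (𝓝[>] 0)
      (𝓝 (∫ p : ℝ, Real.exp (-(2 * α) * p) * twoBesselKZero (2 * x * |Real.sinh p|))) := by
    refine tendsto_integral_filter_of_dominated_convergence _ ?_ ?_
      (integrable_exp_mul_twoBesselKZero h2α hx) ?_
    · filter_upwards [self_mem_nhdsWithin] with ε hε
      have hε : 0 < ε := hε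
      refine Continuous.aestronglyMeasurable (Continuous.mul (by fun_prop) ?_)
      refine continuous_iff_continuousAt.2 fun p => ContinuousAt.comp (g := twoBesselKZero)
        (f := fun p : ℝ => ‖(⟨2 * ε * Real.cosh p, 2 * x * Real.sinh p⟩ : ℂ)‖)
        (continuousAt_twoBesselKZero ?_) ?_
      · rw [norm_pos_iff]
        intro h
        have := congrArg Complex.re h
        have hp := Real.cosh_pos p
        simp at this
        rcases this with h | h <;> linarith
      · exact (hcont.comp (Continuous.prodMk_right ε)).continuousAt
    · filter_upwards with ε
      filter_upwards [hae] with p hp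
      rw [Real.norm_of_nonneg (mul_nonneg (Real.exp_pos _).le (twoBesselKZero_nonneg _))]
      gcongr
      refine twoBesselKZero_le ?_ (hnorm ε p)
      have : 0 < |Real.sinh p| := by simpa using hp
      positivity
    · filter_upwards [hae] with p hp
      refine Tendsto.const_mul _ ?_
      have h0 : ‖(⟨2 * 0 * Real.cosh p, 2 * x * Real.sinh p⟩ : ℂ)‖ = 2 * x * |Real.sinh p| := by
        have : (⟨2 * 0 * Real.cosh p, 2 * x * Real.sinh p⟩ : ℂ) =
            (2 * x * Real.sinh p : ℝ) * Complex.I := by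
          apply Complex.ext <;> simp [-Complex.ofReal_mul, -Complex.ofReal_sinh]
        rw [this, norm_mul, Complex.norm_real, Complex.norm_I, mul_one, Real.norm_eq_abs, abs_mul,
          abs_of_pos (by positivity : 0 < 2 * x)]
      have hpos : 0 < 2 * x * |Real.sinh p| := by
        have : 0 < |Real.sinh p| := by simpa using hp
        positivity
      refine (continuousAt_twoBesselKZero hpos).tendsto.comp ?_
      rw [← h0]
      exact ((hcont.comp (Continuous.prodMk_left p)).tendsto 0).mono_left nhdsWithin_le_nhds
  refine (hlim.const_mul 2).congr' ?_
  filter_upwards [self_mem_nhdsWithin] with ε hε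
  exact (norm_twoBesselK_sq α hε x).symm

theorem integrableOn_exp_neg_mul_sinh {x : ℝ} (hx : 0 < x) (β : ℝ) :
    IntegrableOn (fun t : ℝ => Real.exp (-x * Real.sinh t - β * t)) (Set.Ioi 0) := by
  obtain ⟨C, hC⟩ := exists_exp_neg_mul_sinh_le hx β
  refine Integrable.mono' ((exp_neg_integrableOn_Ioi 0 one_pos).const_mul C)
    (Continuous.aestronglyMeasurable (by fun_prop)) ?_
  filter_upwards [ae_restrict_mem measurableSet_Ioi] with t ht
  rw [Real.norm_of_nonneg (Real.exp_pos _).le]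
  simpa using hC t (le_of_lt ht)

/-- Rotating the half-line in the integral of the Macdonald function by a right angle. -/
theorem integral_Ioi_exp_neg_mul_cosh {ε x : ℝ} (hε : 0 < ε) (hx : 0 < x) (β : ℝ) :
    ∫ t in Set.Ioi (0 : ℝ), Complex.exp (-(ε - x * Complex.I) * Complex.cosh t - β * t) =
      (∫ t in Set.Ioi (0 : ℝ), Complex.exp (-(x + ε * Complex.I) * Complex.sinh t
        - β * (t + (π / 2 : ℝ) * Complex.I))) +
      Complex.I * ∫ θ in (0 : ℝ)..π / 2,
        Complex.exp (-(ε - x * Complex.I) * Complex.cos θ - β * (θ * Complex.I)) := by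
  set z : ℂ := ε - x * Complex.I with hz
  set f : ℂ → ℂ := fun w => Complex.exp (-z * Complex.cosh w - β * w) with hf
  obtain ⟨C, hC⟩ := exists_exp_neg_mul_sinh_le (lt_min hε hx) β
  have hb : ∀ t : ℝ, 0 ≤ t → ∀ θ ∈ Set.uIcc 0 (π / 2),
      ‖f (t + θ * Complex.I)‖ ≤ C * Real.exp (-1 * t) := by
    intro t ht θ hθ
    rw [Set.uIcc_of_le (by positivity)] at hθ
    refine le_trans ?_ (hC t ht)
    rw [hf, norm_exp_neg_mul_cosh]
    have hre : z.re = ε := by simp [hz]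
    have him : z.im = -x := by simp [hz]
    rw [hre, him]
    have hcos : 0 ≤ Real.cos θ :=
      Real.cos_nonneg_of_neg_pi_div_two_le_of_le (by linarith [hθ.1, Real.pi_pos]) hθ.2
    have hsin : 0 ≤ Real.sin θ :=
      Real.sin_nonneg_of_nonneg_of_le_pi hθ.1 (by linarith [hθ.2, Real.pi_pos])
    have hone : 1 ≤ Real.cos θ + Real.sin θ := by
      nlinarith [Real.sin_sq_add_cos_sq θ, mul_nonneg hcos hsin]
    have hs : 0 ≤ Real.sinh t := Real.sinh_nonneg_iff.2 ht
    have h1 : min ε x * Real.sinh t * Real.cos θ ≤ ε * Real.cosh t * Real.cos θ := by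
      gcongr
      · exact min_le_left _ _
      · exact (Real.sinh_lt_cosh t).le
    have h2 : min ε x * Real.sinh t * Real.sin θ ≤ x * Real.sinh t * Real.sin θ := by
      gcongr
      exact min_le_right _ _
    have h3 : min ε x * Real.sinh t ≤ min ε x * Real.sinh t * (Real.cos θ + Real.sin θ) :=
      le_mul_of_one_le_right (mul_nonneg (lt_min hε hx).le hs) hone
    gcongr
    linarith
  have e := integral_Ioi_sub_integral_Ioi_add_mul_I (f := f) (by fun_prop) one_pos hb
  have h1 : ∀ t : ℝ, f (t + (π / 2 : ℝ) * Complex.I) =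
      Complex.exp (-(x + ε * Complex.I) * Complex.sinh t
        - β * (t + (π / 2 : ℝ) * Complex.I)) := fun t => by
    rw [hf]
    simp only [Complex.cosh_add, Complex.cosh_mul_I, Complex.sinh_mul_I]
    rw [← Complex.ofReal_cos, ← Complex.ofReal_sin, Real.cos_pi_div_two, Real.sin_pi_div_two, hz]
    congr 1
    push_cast
    linear_combination (x * Complex.sinh t) * Complex.I_mul_I
  have h2 : ∀ θ : ℝ, f (θ * Complex.I) =
      Complex.exp (-z * Complex.cos θ - β * (θ * Complex.I)) := fun θ => by
    rw [hf]
    simp only [Complex.cosh_mul_I]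
  simp only [h1, h2] at e
  linear_combination e

/-- The boundary value on the imaginary axis of one half of the integral of the Macdonald
function. -/
noncomputable def halfHankel (β x : ℝ) : ℂ :=
  (∫ t in Set.Ioi (0 : ℝ), Complex.exp (-x * Complex.sinh t
    - β * (t + (π / 2 : ℝ) * Complex.I))) +
  Complex.I * ∫ θ in (0 : ℝ)..π / 2,
    Complex.exp (x * Complex.I * Complex.cos θ - β * (θ * Complex.I))

theorem tendsto_integral_Ioi_exp_neg_mul_cosh {x : ℝ} (hx : 0 < x) (β : ℝ) :
    Tendsto (fun ε : ℝ => ∫ t in Set.Ioi (0 : ℝ),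
      Complex.exp (-(ε - x * Complex.I) * Complex.cosh t - β * t)) (𝓝[>] 0)
      (𝓝 (halfHankel β x)) := by
  have h1 : Tendsto (fun ε : ℝ => ∫ t in Set.Ioi (0 : ℝ),
      Complex.exp (-(x + ε * Complex.I) * Complex.sinh t - β * (t + (π / 2 : ℝ) * Complex.I)))
      (𝓝[>] 0) (𝓝 (∫ t in Set.Ioi (0 : ℝ),
        Complex.exp (-x * Complex.sinh t - β * (t + (π / 2 : ℝ) * Complex.I)))) := by
    refine tendsto_integral_filter_of_dominated_convergence _
      (.of_forall fun ε => Continuous.aestronglyMeasurable (by fun_prop)) ?_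
      (integrableOn_exp_neg_mul_sinh hx β) ?_
    · refine .of_forall fun ε => .of_forall fun t => ?_
      rw [Complex.norm_exp, ← Complex.ofReal_sinh]
      simp [-Complex.ofReal_sinh]
    · refine .of_forall fun t => ?_
      have hc : Continuous fun ε : ℝ => Complex.exp (-(x + ε * Complex.I) * Complex.sinh t
        - β * (t + (π / 2 : ℝ) * Complex.I)) := by fun_prop
      simpa using (hc.tendsto 0).mono_left (nhdsWithin_le_nhds (s := Set.Ioi 0))
  have h2 : Tendsto (fun ε : ℝ => ∫ θ in (0 : ℝ)..π / 2,
        Complex.exp (-(ε - x * Complex.I) * Complex.cos θ - β * (θ * Complex.I)))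
      (𝓝[>] 0) (𝓝 (∫ θ in (0 : ℝ)..π / 2,
        Complex.exp (x * Complex.I * Complex.cos θ - β * (θ * Complex.I)))) := by
    have hc : Continuous fun ε : ℝ => ∫ θ in (0 : ℝ)..π / 2,
        Complex.exp (-(ε - x * Complex.I) * Complex.cos θ - β * (θ * Complex.I)) :=
      intervalIntegral.continuous_parametric_intervalIntegral_of_continuous' (by fun_prop) _ _
    simpa using (hc.tendsto 0).mono_left (nhdsWithin_le_nhds (s := Set.Ioi 0))
  refine (h1.add (h2.const_mul Complex.I)).congr' ?_
  filter_upwards [self_mem_nhdsWithin] with ε hε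
  exact (integral_Ioi_exp_neg_mul_cosh hε hx β).symm

theorem tendsto_twoBesselK {x : ℝ} (hx : 0 < x) (α : ℝ) :
    Tendsto (fun ε : ℝ => twoBesselK α (ε - x * Complex.I)) (𝓝[>] 0)
      (𝓝 (halfHankel α x + halfHankel (-α) x)) := by
  refine ((tendsto_integral_Ioi_exp_neg_mul_cosh hx α).add
    (tendsto_integral_Ioi_exp_neg_mul_cosh hx (-α))).congr' ?_
  filter_upwards [self_mem_nhdsWithin] with ε hε
  have hε : 0 < ε := hε
  rw [twoBesselK, integral_eq_integral_Ioi_add_comp_neg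
    (integrable_exp_neg_mul_cosh (by simpa using hε) α)]
  simp

/-- Schläfli's integral for the Bessel function of the first kind. -/
noncomputable def schlaefliJ (α x : ℝ) : ℝ :=
  (1 / π) * (∫ θ in (0 : ℝ)..π, Real.cos (x * Real.sin θ - α * θ)) -
    Real.sin (α * π) / π * ∫ t in Set.Ioi (0 : ℝ), Real.exp (-x * Real.sinh t - α * t)

theorem integral_exp_mul_I (g : ℝ → ℝ) (hg : Continuous g) (a b : ℝ) :
    ∫ θ in a..b, Complex.exp (g θ * Complex.I) =
      (∫ θ in a..b, Real.cos (g θ) : ℝ) + (∫ θ in a..b, Real.sin (g θ) : ℝ) * Complex.I := by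
  rw [← intervalIntegral.integral_ofReal, ← intervalIntegral.integral_ofReal,
    ← intervalIntegral.integral_mul_const, ← intervalIntegral.integral_add]
  · refine intervalIntegral.integral_congr fun θ _ => ?_
    simp [Complex.exp_mul_I]
  · exact Continuous.intervalIntegrable (by fun_prop) _ _
  · exact Continuous.intervalIntegrable (by fun_prop) _ _

theorem halfHankel_add_halfHankel_neg {x : ℝ} (hx : 0 < x) (α : ℝ) :
    Complex.exp (-(α * (π / 2)) * Complex.I) * (halfHankel α x + halfHankel (-α) x) =
      π * Complex.I * (schlaefliJ α x + besselY α x * Complex.I) := by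
  set A := ∫ t in Set.Ioi (0 : ℝ), Real.exp (-x * Real.sinh t - α * t) with hA
  set B := ∫ t in Set.Ioi (0 : ℝ), Real.exp (-x * Real.sinh t - (-α) * t) with hB
  set w := Complex.exp (-(α * (π / 2)) * Complex.I) with hw
  have hw' : w * Complex.exp ((α * (π / 2)) * Complex.I) = 1 := by
    rw [hw, ← Complex.exp_add]; simp
  have hww : w * w = Real.cos (α * π) - Real.sin (α * π) * Complex.I := by
    rw [hw, ← Complex.exp_add, show -(α * (π / 2) : ℂ) * Complex.I + -(α * (π / 2)) * Complex.I =
      ((-(α * π) : ℝ) : ℂ) * Complex.I by push_cast; ring, Complex.exp_ofReal_mul_I]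
    simp
    ring
  have hray : ∀ β : ℝ, ∫ t in Set.Ioi (0 : ℝ), Complex.exp (-x * Complex.sinh t
      - β * (t + (π / 2 : ℝ) * Complex.I)) =
      Complex.exp (-(β * (π / 2)) * Complex.I) *
        (∫ t in Set.Ioi (0 : ℝ), Real.exp (-x * Real.sinh t - β * t) : ℝ) := fun β => by
    rw [← integral_complex_ofReal, ← integral_const_mul]
    congr with t
    push_cast
    rw [← Complex.exp_add]
    congr 1
    ring
  have harc : w * ((∫ θ in (0 : ℝ)..π / 2,
        Complex.exp (x * Complex.I * Complex.cos θ - α * (θ * Complex.I))) +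
      ∫ θ in (0 : ℝ)..π / 2,
        Complex.exp (x * Complex.I * Complex.cos θ - (-α : ℝ) * (θ * Complex.I))) =
      ∫ θ in (0 : ℝ)..π, Complex.exp ((x * Real.sin θ - α * θ : ℝ) * Complex.I) := by
    set g : ℝ → ℂ := fun θ => Complex.exp ((x * Real.sin θ - α * θ : ℝ) * Complex.I) with hg
    have hgc : Continuous g := by fun_prop
    have h1 := intervalIntegral.integral_comp_add_left (a := 0) (b := π / 2) g (π / 2)
    have h2 := intervalIntegral.integral_comp_sub_left (a := 0) (b := π / 2) g (π / 2)
    rw [add_zero, add_halves] at h1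
    rw [sub_zero, sub_self] at h2
    rw [← intervalIntegral.integral_add_adjacent_intervals (hgc.intervalIntegrable 0 (π / 2))
      (hgc.intervalIntegrable (π / 2) π), ← h1, ← h2, mul_add, add_comm,
      ← intervalIntegral.integral_const_mul, ← intervalIntegral.integral_const_mul]
    congr 1
    · refine intervalIntegral.integral_congr fun θ _ => ?_
      simp only [hg, hw, Real.sin_pi_div_two_sub, ← Complex.exp_add]
      congr 1
      push_cast
      ring
    · refine intervalIntegral.integral_congr fun θ _ => ?_
      simp only [hg, hw, add_comm (π / 2) θ, Real.sin_add_pi_div_two, ← Complex.exp_add]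
      congr 1
      push_cast
      ring
  have hY : π * besselY α x = (∫ θ in (0 : ℝ)..π, Real.sin (x * Real.sin θ - α * θ)) -
      (B + A * Real.cos (α * π)) := by
    rw [besselY, hA, hB, ← integral_mul_const, ← integral_add
      (integrableOn_exp_neg_mul_sinh hx (-α))
      ((integrableOn_exp_neg_mul_sinh hx α).mul_const _), ← mul_sub, ← mul_assoc,
      mul_one_div_cancel Real.pi_ne_zero, one_mul]
    congr 2 with t
    rw [add_mul, ← Real.exp_add, mul_right_comm, ← Real.exp_add]
    ring_nf
  have hJ : π * schlaefliJ α x = (∫ θ in (0 : ℝ)..π, Real.cos (x * Real.sin θ - α * θ)) -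
      Real.sin (α * π) * A := by
    rw [schlaefliJ, ← hA]
    have := Real.pi_ne_zero
    field_simp
  have hY' := congrArg ((↑) : ℝ → ℂ) hY
  have hJ' := congrArg ((↑) : ℝ → ℂ) hJ
  rw [integral_exp_mul_I _ (by fun_prop)] at harc
  have hneg : Complex.exp (-((-α : ℝ) * (π / 2)) * Complex.I) =
      Complex.exp ((α * (π / 2)) * Complex.I) := by push_cast; ring_nf
  rw [halfHankel, halfHankel, hray, hray, hneg, ← hA, ← hB, ← hw]
  push_cast at *
  linear_combination A * hww + B * hw' + Complex.I * harc - Complex.I * hJ' -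
    Complex.I * Complex.I * hY' + (B + A * Complex.cos (α * π)) * Complex.I_mul_I

theorem norm_halfHankel_sq {x : ℝ} (hx : 0 < x) (α : ℝ) :
    ‖halfHankel α x + halfHankel (-α) x‖ ^ 2 =
      π ^ 2 * (schlaefliJ α x ^ 2 + besselY α x ^ 2) := by
  have h := congrArg (fun w : ℂ => ‖w‖ ^ 2) (halfHankel_add_halfHankel_neg hx α)
  have h1 : ‖Complex.exp (-(α * (π / 2)) * Complex.I)‖ = 1 := by
    have := Complex.norm_exp_ofReal_mul_I (-(α * (π / 2)))
    push_cast at this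
    exact this
  simp only [norm_mul, h1, one_mul, Complex.norm_I, mul_one, Complex.norm_real,
    Real.norm_of_nonneg Real.pi_pos.le, mul_pow] at h
  rw [h, ← Complex.normSq_eq_norm_sq, Complex.normSq_add_mul_I]

/-- Nicholson's formula. -/
theorem schlaefliJ_sq_add_besselY_sq {α : ℝ} (hα : |α| ≤ 1 / 2) {x : ℝ} (hx : 0 < x) :
    π ^ 2 * (schlaefliJ α x ^ 2 + besselY α x ^ 2) =
      2 * ∫ p : ℝ, Real.exp (-(2 * α) * p) * twoBesselKZero (2 * x * |Real.sinh p|) := by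
  rw [← norm_halfHankel_sq hx]
  exact tendsto_nhds_unique ((tendsto_twoBesselK hx α).norm.pow 2)
    (tendsto_norm_twoBesselK_sq hα hx)

theorem integral_exp_mul_twoBesselKZero_eq {β : ℝ} (hβ : |β| ≤ 1) {x : ℝ} (hx : 0 < x) :
    x * ∫ p : ℝ, Real.exp (-β * p) * twoBesselKZero (2 * x * |Real.sinh p|) =
      ∫ v : ℝ, Real.cosh (β * Real.arsinh (v / x)) / Real.cosh (Real.arsinh (v / x)) *
        twoBesselKZero (2 * |v|) := by
  set g : ℝ → ℝ := fun p => twoBesselKZero (2 * x * |Real.sinh p|) with hg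
  have i1 : Integrable fun p : ℝ => Real.exp (-β * p) * g p :=
    integrable_exp_mul_twoBesselKZero (by rwa [abs_neg]) hx
  have i2 : Integrable fun p : ℝ => Real.exp (β * p) * g p :=
    integrable_exp_mul_twoBesselKZero hβ hx
  have hsymm : ∫ p : ℝ, Real.exp (β * p) * g p = ∫ p : ℝ, Real.exp (-β * p) * g p := by
    rw [← integral_neg_eq_self]
    congr with p
    simp [hg]
  have hcosh : ∫ p : ℝ, Real.exp (-β * p) * g p = ∫ p : ℝ, Real.cosh (β * p) * g p := by
    have h1 := integral_add i2 i1
    have h2 : ∫ p : ℝ, Real.cosh (β * p) * g p =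
        2⁻¹ * ∫ p : ℝ, (Real.exp (β * p) * g p + Real.exp (-β * p) * g p) := by
      rw [← integral_const_mul]
      congr with p
      rw [Real.cosh_eq]
      ring_nf
    rw [h2, h1, hsymm]
    ring
  rw [hcosh, ← integral_comp_mul_sinh hx (fun v => Real.cosh (β * Real.arsinh (v / x)) /
    Real.cosh (Real.arsinh (v / x)) * twoBesselKZero (2 * |v|)), ← integral_const_mul]
  congr with p
  have := Real.cosh_pos p
  rw [mul_div_cancel_left₀ _ hx.ne', Real.arsinh_sinh, abs_mul, abs_of_pos hx, ← mul_assoc 2 x]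
  rw [show g p = twoBesselKZero (2 * x * |Real.sinh p|) from rfl, mul_assoc x,
    ← mul_assoc (Real.cosh p), mul_div_cancel₀ _ this.ne']

theorem cosh_mul_div_cosh_le_one {β : ℝ} (hβ : |β| ≤ 1) (p : ℝ) :
    Real.cosh (β * p) / Real.cosh p ≤ 1 := by
  rw [div_le_one (Real.cosh_pos p), Real.cosh_le_cosh, abs_mul]
  exact mul_le_of_le_one_left (abs_nonneg _) hβ

theorem norm_cosh_mul_div_cosh_mul_le {β : ℝ} (hβ : |β| ≤ 1) (p v : ℝ) :
    ‖Real.cosh (β * p) / Real.cosh p * twoBesselKZero (2 * |v|)‖ ≤ twoBesselKZero (2 * |v|) := by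
  rw [Real.norm_of_nonneg (mul_nonneg (div_nonneg (Real.cosh_pos _).le (Real.cosh_pos _).le)
    (twoBesselKZero_nonneg _))]
  exact mul_le_of_le_one_left (twoBesselKZero_nonneg _) (cosh_mul_div_cosh_le_one hβ p)

theorem continuous_cosh_mul_arsinh_div_cosh (β : ℝ) :
    Continuous fun u : ℝ => Real.cosh (β * Real.arsinh u) / Real.cosh (Real.arsinh u) :=
  (Real.continuous_cosh.comp (Real.continuous_arsinh.const_mul β)).div
    (Real.continuous_cosh.comp Real.continuous_arsinh) fun _ => (Real.cosh_pos _).ne'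

theorem aestronglyMeasurable_cosh_div_cosh_mul (β x : ℝ) :
    AEStronglyMeasurable (fun v : ℝ => Real.cosh (β * Real.arsinh (v / x)) /
      Real.cosh (Real.arsinh (v / x)) * twoBesselKZero (2 * |v|)) volume := by
  refine AEStronglyMeasurable.mul (Continuous.aestronglyMeasurable ?_)
    integrable_twoBesselKZero_abs.aestronglyMeasurable
  exact (continuous_cosh_mul_arsinh_div_cosh β).comp (continuous_id.div_const x)

theorem mul_schlaefliJ_sq_add_besselY_sq_eq {α : ℝ} (hα : |α| ≤ 1 / 2) {x : ℝ} (hx : 0 < x) :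
    x * (schlaefliJ α x ^ 2 + besselY α x ^ 2) = 2 / π ^ 2 *
      ∫ v : ℝ, Real.cosh (2 * α * Real.arsinh (v / x)) / Real.cosh (Real.arsinh (v / x)) *
        twoBesselKZero (2 * |v|) := by
  have h2α : |2 * α| ≤ 1 := by rw [abs_mul, abs_two]; linarith
  have h := schlaefliJ_sq_add_besselY_sq hα hx
  rw [← integral_exp_mul_twoBesselKZero_eq h2α hx]
  rw [div_mul_eq_mul_div, eq_div_iff (by positivity)]
  linear_combination x * h

theorem mul_schlaefliJ_sq_add_besselY_sq_le {α : ℝ} (hα : |α| ≤ 1 / 2) {x : ℝ} (hx : 0 < x) :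
    x * (schlaefliJ α x ^ 2 + besselY α x ^ 2) ≤ 2 / π := by
  have h2α : |2 * α| ≤ 1 := by rw [abs_mul, abs_two]; linarith
  rw [mul_schlaefliJ_sq_add_besselY_sq_eq hα hx]
  calc _ ≤ 2 / π ^ 2 * ∫ v : ℝ, twoBesselKZero (2 * |v|) := by
        refine mul_le_mul_of_nonneg_left ?_ (by positivity)
        refine integral_mono (integrable_twoBesselKZero_abs.mono'
          (aestronglyMeasurable_cosh_div_cosh_mul _ _)
          (.of_forall fun v => norm_cosh_mul_div_cosh_mul_le h2α _ v))
          integrable_twoBesselKZero_abs fun v => ?_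
        exact (le_abs_self _).trans (norm_cosh_mul_div_cosh_mul_le h2α _ v)
    _ = 2 / π := by
        rw [integral_twoBesselKZero_abs]
        have := Real.pi_ne_zero
        field_simp

theorem tendsto_mul_schlaefliJ_sq_add_besselY_sq {α : ℝ} (hα : |α| ≤ 1 / 2) :
    Tendsto (fun x => x * (schlaefliJ α x ^ 2 + besselY α x ^ 2)) atTop (𝓝 (2 / π)) := by
  have h2α : |2 * α| ≤ 1 := by rw [abs_mul, abs_two]; linarith
  have hlim : Tendsto (fun x : ℝ => ∫ v : ℝ, Real.cosh (2 * α * Real.arsinh (v / x)) /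
      Real.cosh (Real.arsinh (v / x)) * twoBesselKZero (2 * |v|)) atTop
      (𝓝 (∫ v : ℝ, twoBesselKZero (2 * |v|))) := by
    refine tendsto_integral_filter_of_dominated_convergence _
      (.of_forall fun x => aestronglyMeasurable_cosh_div_cosh_mul _ _)
      (.of_forall fun x => .of_forall fun v => norm_cosh_mul_div_cosh_mul_le h2α _ v)
      integrable_twoBesselKZero_abs (.of_forall fun v => ?_)
    have h0 : Tendsto (fun x : ℝ => v / x) atTop (𝓝 0) := tendsto_const_nhds.div_atTop tendsto_id
    have hc := (continuous_cosh_mul_arsinh_div_cosh (2 * α)).mul_const (twoBesselKZero (2 * |v|))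
    simpa [Function.comp_def] using (hc.tendsto 0).comp h0
  rw [integral_twoBesselKZero_abs] at hlim
  have h := hlim.const_mul (2 / π ^ 2)
  have e : 2 / π ^ 2 * π = 2 / π := by
    have := Real.pi_ne_zero
    field_simp
  rw [e] at h
  refine h.congr' ?_
  filter_upwards [eventually_gt_atTop 0] with x hx
  exact (mul_schlaefliJ_sq_add_besselY_sq_eq hα hx).symm

/-- The circular part of Hankel's contour integral for the reciprocal Gamma function. -/
noncomputable def hankelCircle (r ν : ℝ) : ℂ :=
  ∫ θ in (-π)..π, Complex.exp (r * Complex.exp (θ * Complex.I) - ν * θ * Complex.I)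

/-- The radial part of Hankel's contour integral for the reciprocal Gamma function. -/
noncomputable def hankelRay (r ν : ℝ) : ℝ :=
  ∫ t in Set.Ioi (0 : ℝ), Real.exp (-r * Real.exp t - ν * t)

theorem exists_exp_neg_mul_exp_le {r : ℝ} (hr : 0 < r) (ν : ℝ) :
    ∃ C, ∀ t, 0 ≤ t → Real.exp (-r * Real.exp t - ν * t) ≤ C * Real.exp (-1 * t) := by
  obtain ⟨C, hC⟩ := exists_mul_sub_le_mul_exp (1 - ν) hr
  refine ⟨Real.exp C, fun t ht => ?_⟩
  rw [← Real.exp_add]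
  gcongr
  linarith [hC t ht]

theorem integrableOn_hankelRay {r : ℝ} (hr : 0 < r) (ν : ℝ) :
    IntegrableOn (fun t : ℝ => Real.exp (-r * Real.exp t - ν * t)) (Set.Ioi 0) := by
  obtain ⟨C, hC⟩ := exists_exp_neg_mul_exp_le hr ν
  refine Integrable.mono' ((exp_neg_integrableOn_Ioi 0 one_pos).const_mul C)
    (Continuous.aestronglyMeasurable (by fun_prop)) ?_
  filter_upwards [ae_restrict_mem measurableSet_Ioi] with t ht
  rw [Real.norm_of_nonneg (Real.exp_pos _).le]
  exact hC t (le_of_lt ht)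

theorem mul_hankelRay_sub_one {r : ℝ} (hr : 0 < r) (ν : ℝ) :
    r * hankelRay r (ν - 1) + ν * hankelRay r ν = Real.exp (-r) := by
  obtain ⟨C, hC⟩ := exists_exp_neg_mul_exp_le hr ν
  have i1 := (integrableOn_hankelRay hr (ν - 1)).const_mul r
  have i2 := (integrableOn_hankelRay hr ν).const_mul ν
  have hd : ∀ t ∈ Set.Ioi (0 : ℝ), HasDerivAt (fun t => -Real.exp (-r * Real.exp t - ν * t))
      (r * Real.exp (-r * Real.exp t - (ν - 1) * t) +
        ν * Real.exp (-r * Real.exp t - ν * t)) t := by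
    intro t _
    have := ((((Real.hasDerivAt_exp t).const_mul (-r)).sub
      ((hasDerivAt_id t).const_mul ν)).exp).neg
    refine this.congr_deriv ?_
    rw [show -r * Real.exp t - (ν - 1) * t = (-r * Real.exp t - ν * t) + t by ring, Real.exp_add]
    simp only [Pi.sub_apply, id]
    ring
  have hlim : Tendsto (fun t : ℝ => -Real.exp (-r * Real.exp t - ν * t)) atTop (𝓝 0) := by
    have hexp : Tendsto (fun t : ℝ => C * Real.exp (-1 * t)) atTop (𝓝 0) := by
      simpa using (Real.tendsto_exp_neg_atTop_nhds_zero).const_mul C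
    refine squeeze_zero_norm' ?_ hexp
    filter_upwards [eventually_ge_atTop 0] with t ht
    rw [norm_neg, Real.norm_of_nonneg (Real.exp_pos _).le]
    exact hC t ht
  have := integral_Ioi_of_hasDerivAt_of_tendsto (a := 0)
    (Continuous.continuousWithinAt (by fun_prop)) hd (i1.add i2) hlim
  rw [integral_add i1 i2, integral_const_mul, integral_const_mul] at this
  simpa [hankelRay] using this

theorem mul_hankelCircle_sub_one (r ν : ℝ) :
    r * hankelCircle r (ν - 1) - ν * hankelCircle r ν =
      -(2 * Real.sin (π * ν) * Real.exp (-r) : ℝ) := by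
  have hd : ∀ θ ∈ Set.uIcc (-π) π, HasDerivAt
      (fun θ : ℝ => Complex.exp (r * Complex.exp (θ * Complex.I) - ν * θ * Complex.I))
      (Complex.I *
        (r * Complex.exp (r * Complex.exp (θ * Complex.I) - (ν - 1 : ℝ) * θ * Complex.I) -
        ν * Complex.exp (r * Complex.exp (θ * Complex.I) - ν * θ * Complex.I))) θ := by
    intro θ _
    have h0 : HasDerivAt (fun θ : ℝ => (θ : ℂ)) 1 θ := Complex.ofRealCLM.hasDerivAt
    have := ((((h0.mul_const Complex.I).cexp).const_mul (r : ℂ)).sub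
      ((h0.const_mul (ν : ℂ)).mul_const Complex.I)).cexp
    refine this.congr_deriv ?_
    rw [show (r * Complex.exp (θ * Complex.I) - (ν - 1 : ℝ) * θ * Complex.I : ℂ) =
      (r * Complex.exp (θ * Complex.I) - ν * θ * Complex.I) + θ * Complex.I by push_cast; ring,
      Complex.exp_add]
    simp only [Pi.sub_apply]
    ring
  have h := intervalIntegral.integral_eq_sub_of_hasDerivAt hd
    (Continuous.intervalIntegrable (by fun_prop) _ _)
  rw [intervalIntegral.integral_const_mul, intervalIntegral.integral_sub
    (Continuous.intervalIntegrable (by fun_prop) _ _)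
    (Continuous.intervalIntegrable (by fun_prop) _ _), intervalIntegral.integral_const_mul,
    intervalIntegral.integral_const_mul] at h
  have e1 : Complex.exp ((-π : ℝ) * Complex.I) = -1 := by
    rw [Complex.exp_ofReal_mul_I]; simp
  rw [e1, Complex.exp_pi_mul_I] at h
  have e2 : ∀ s : ℝ, Complex.exp (r * -1 - ν * s * Complex.I) =
      Real.exp (-r) * (Real.cos (ν * s) - Real.sin (ν * s) * Complex.I) := fun s => by
    rw [show (r * -1 - ν * s * Complex.I : ℂ) = ((-r : ℝ) : ℂ) + ((-(ν * s) : ℝ) : ℂ) * Complex.I by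
      push_cast; ring, Complex.exp_add, Complex.exp_ofReal_mul_I, Complex.ofReal_exp,
      Real.cos_neg, Real.sin_neg]
    push_cast
    ring
  rw [e2, e2, mul_neg, Real.cos_neg, Real.sin_neg, mul_comm ν π] at h
  change Complex.I * (r * hankelCircle r (ν - 1) - ν * hankelCircle r ν) = _ at h
  apply mul_left_cancel₀ Complex.I_ne_zero
  rw [h]
  push_cast
  ring

theorem hasSum_hankelCircle (r ν : ℝ) :
    HasSum (fun n : ℕ => ((r : ℂ) ^ n / n.factorial) *
      ∫ θ in (-π)..π, Complex.exp ((n - ν) * Complex.I * θ)) (hankelCircle r ν) := by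
  have h := intervalIntegral.hasSum_integral_of_dominated_convergence (μ := volume)
    (a := -π) (b := π)
    (F := fun (n : ℕ) (θ : ℝ) => ((r : ℂ) ^ n / n.factorial) *
      Complex.exp ((n - ν) * Complex.I * θ))
    (f := fun θ : ℝ => Complex.exp (r * Complex.exp (θ * Complex.I) - ν * θ * Complex.I))
    (fun n _ => |r| ^ n / n.factorial)
    (fun n => Continuous.aestronglyMeasurable (by fun_prop)) ?_ ?_ ?_ ?_
  · simp only [intervalIntegral.integral_const_mul] at h
    exact h
  · refine fun n => .of_forall fun θ _ => le_of_eq ?_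
    rw [norm_mul, Complex.norm_exp]
    simp
  · exact .of_forall fun θ _ => Real.summable_pow_div_factorial _
  · exact intervalIntegrable_const
  · refine .of_forall fun θ _ => ?_
    have h1 := (NormedSpace.expSeries_div_hasSum_exp (𝔸 := ℂ)
      (r * Complex.exp (θ * Complex.I))).mul_right (Complex.exp (-(ν * θ * Complex.I)))
    rw [← Complex.exp_eq_exp_ℂ, ← Complex.exp_add, ← sub_eq_add_neg] at h1
    refine h1.congr_fun fun n => ?_
    rw [mul_pow, ← Complex.exp_nat_mul, mul_div_right_comm, mul_assoc (_ / _), ← Complex.exp_add]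
    congr 2
    ring

theorem integral_exp_mul_I_mul {s : ℝ} (hs : s ≠ 0) :
    ∫ θ in (-π)..π, Complex.exp (s * Complex.I * θ) = (2 * Real.sin (π * s) / s : ℝ) := by
  have hs' : (s : ℂ) ≠ 0 := by exact_mod_cast hs
  rw [integral_exp_mul_complex (mul_ne_zero hs' Complex.I_ne_zero)]
  have h1 : (s * Complex.I * π : ℂ) = ((π * s : ℝ) : ℂ) * Complex.I := by push_cast; ring
  have h2 : (s * Complex.I * (-π : ℝ) : ℂ) = ((-(π * s) : ℝ) : ℂ) * Complex.I := by
    push_cast; ring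
  rw [h1, h2, Complex.exp_ofReal_mul_I, Complex.exp_ofReal_mul_I, Real.cos_neg, Real.sin_neg]
  have := Complex.I_ne_zero
  push_cast
  field_simp
  ring

theorem hasSum_integral_exp_neg_mul_exp_neg_add (r : ℝ) {ν : ℝ} (hν : ν < 0) :
    HasSum (fun n : ℕ => (-r) ^ n / n.factorial * (1 / (n - ν)))
      (∫ t in Set.Ioi (0 : ℝ), Real.exp (-r * Real.exp (-t) + ν * t)) := by
  have h := hasSum_integral_of_dominated_convergence (μ := volume.restrict (Set.Ioi (0 : ℝ)))
    (F := fun (n : ℕ) (t : ℝ) => (-r) ^ n / n.factorial * Real.exp (-(n - ν) * t))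
    (f := fun t : ℝ => Real.exp (-r * Real.exp (-t) + ν * t))
    (fun n t => |r| ^ n / n.factorial * Real.exp (-(-ν) * t))
    (fun n => Continuous.aestronglyMeasurable (by fun_prop)) ?_ ?_ ?_ ?_
  · simp only [integral_const_mul] at h
    refine h.congr_fun fun n => ?_
    have hn : 0 < n - ν := by have := n.cast_nonneg (α := ℝ); linarith
    have := integral_exp_mul_Ioi (a := -(n - ν)) (by linarith) 0
    rw [this]
    rw [mul_zero, Real.exp_zero, neg_div_neg_eq]
  · intro n
    filter_upwards [ae_restrict_mem measurableSet_Ioi] with t ht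
    rw [norm_mul, Real.norm_of_nonneg (Real.exp_pos _).le]
    have : 0 ≤ (n : ℝ) * t := mul_nonneg n.cast_nonneg (le_of_lt ht)
    have : -(n - ν) * t ≤ -(-ν) * t := by linarith
    simp only [norm_div, norm_pow, norm_neg, Real.norm_eq_abs, Nat.abs_cast]
    gcongr
  · exact .of_forall fun t => (Real.summable_pow_div_factorial _).mul_right _
  · simp only [tsum_mul_right]
    exact (exp_neg_integrableOn_Ioi 0 (neg_pos.2 hν)).const_mul _
  · refine .of_forall fun t => ?_
    have h1 := (NormedSpace.expSeries_div_hasSum_exp (𝔸 := ℝ)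
      (-r * Real.exp (-t))).mul_right (Real.exp (ν * t))
    rw [← Real.exp_eq_exp_ℝ, ← Real.exp_add] at h1
    refine h1.congr_fun fun n => ?_
    rw [mul_pow, ← Real.exp_nat_mul, mul_div_right_comm, mul_assoc (_ / _), ← Real.exp_add]
    congr 2
    ring

theorem integral_add_hankelRay {r ν : ℝ} (hr : 0 < r) (hν : ν < 0) :
    (∫ t in Set.Ioi (0 : ℝ), Real.exp (-r * Real.exp (-t) + ν * t)) + hankelRay r ν =
      r ^ ν * Real.Gamma (-ν) := by
  have h1 := integral_image_eq_integral_abs_deriv_smul (s := Set.univ) MeasurableSet.univ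
    (fun t _ => (Real.hasDerivAt_exp t).hasDerivWithinAt) Real.exp_injective.injOn
    (fun u => u ^ (-ν - 1) * Real.exp (-(r * u)))
  rw [Set.image_univ, Real.range_exp, Real.integral_rpow_mul_exp_neg_mul_Ioi (neg_pos.2 hν) hr,
    Measure.restrict_univ] at h1
  have e : ∀ t : ℝ, |Real.exp t| • (Real.exp t ^ (-ν - 1) * Real.exp (-(r * Real.exp t))) =
      Real.exp (-r * Real.exp t - ν * t) := fun t => by
    rw [abs_of_pos (Real.exp_pos t), ← Real.exp_mul, smul_eq_mul, ← Real.exp_add, ← Real.exp_add]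
    ring_nf
  simp only [e] at h1
  have hIic : IntegrableOn (fun t : ℝ => Real.exp (-r * Real.exp t - ν * t)) (Set.Iic 0) := by
    refine Integrable.mono' (integrableOn_exp_mul_Iic (neg_pos.2 hν) 0)
      (Continuous.aestronglyMeasurable (by fun_prop)) (.of_forall fun t => ?_)
    rw [Real.norm_of_nonneg (Real.exp_pos _).le]
    gcongr
    have := mul_pos hr (Real.exp_pos t)
    linarith
  rw [hankelRay, one_div, Real.inv_rpow hr.le, ← Real.rpow_neg hr.le, neg_neg] at *
  rw [h1, ← intervalIntegral.integral_Iic_add_Ioi hIic (integrableOn_hankelRay hr ν)]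
  congr 1
  have := integral_comp_neg_Ioi 0 (fun t : ℝ => Real.exp (-r * Real.exp t - ν * t))
  rw [neg_zero] at this
  rw [← this]
  congr with t
  ring_nf

theorem hankelCircle_of_neg {r ν : ℝ} (hν : ν < 0) :
    hankelCircle r ν = (-2 * Real.sin (π * ν) *
      ∫ t in Set.Ioi (0 : ℝ), Real.exp (-r * Real.exp (-t) + ν * t) : ℝ) := by
  refine (hasSum_hankelCircle r ν).unique ?_
  refine (Complex.hasSum_ofReal.2 ((hasSum_integral_exp_neg_mul_exp_neg_add r hν).mul_left
    (-2 * Real.sin (π * ν)))).congr_fun fun n => ?_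
  have hn : (n : ℝ) - ν ≠ 0 := by have := n.cast_nonneg (α := ℝ); linarith
  have h := integral_exp_mul_I_mul hn
  rw [Complex.ofReal_sub, Complex.ofReal_natCast] at h
  rw [h, mul_sub, mul_comm π (n : ℝ), Real.sin_nat_mul_pi_sub, neg_pow r]
  push_cast
  ring

theorem hankelCircle_zero (r : ℝ) : hankelCircle r 0 = (2 * π : ℝ) := by
  have h := hasSum_single (f := fun n : ℕ => ((r : ℂ) ^ n / n.factorial) *
      ∫ θ in (-π)..π, Complex.exp ((n - (0 : ℝ)) * Complex.I * θ)) 0 fun n hn => by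
    have h := integral_exp_mul_I_mul (s := n) (by exact_mod_cast hn)
    rw [mul_comm π, Real.sin_nat_mul_pi] at h
    simp at h
    simp [h]
  rw [(hasSum_hankelCircle r 0).unique h]
  simp
  ring

/-- Hankel's contour integral for the reciprocal Gamma function. -/
theorem hankelCircle_eq {r ν : ℝ} (hr : 0 < r) (hν : -1 < ν) :
    hankelCircle r ν =
      (2 * π * r ^ ν / Real.Gamma (ν + 1) + 2 * Real.sin (π * ν) * hankelRay r ν : ℝ) := by
  obtain ⟨n, hn⟩ := exists_nat_ge ν
  induction n generalizing ν with
  | zero =>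
    rw [Nat.cast_zero] at hn
    rcases hn.lt_or_eq with hneg | rfl
    · have h1 := integral_add_hankelRay hr hneg
      have h2 := Real.Gamma_mul_Gamma_one_sub (-ν)
      have hs : Real.sin (π * ν) ≠ 0 := by
        refine (Real.sin_neg_of_neg_of_neg_pi_lt ?_ ?_).ne <;> nlinarith [Real.pi_pos]
      have hG : Real.Gamma (ν + 1) ≠ 0 := (Real.Gamma_pos_of_pos (by linarith)).ne'
      rw [sub_neg_eq_add, mul_neg, Real.sin_neg, add_comm 1 ν, div_neg,
        ← neg_div, eq_div_iff hs] at h2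
      rw [hankelCircle_of_neg hneg]
      congr 1
      rw [← sub_eq_iff_eq_add, eq_div_iff hG]
      linear_combination (-2 * Real.sin (π * ν) * Real.Gamma (ν + 1)) * h1 - 2 * r ^ ν * h2
    · rw [hankelCircle_zero]
      simp
  | succ n ih =>
    rcases le_or_gt ν 0 with h0 | h0
    · exact ih hν (h0.trans n.cast_nonneg)
    · have h1 := mul_hankelCircle_sub_one r ν
      have h2 := mul_hankelRay_sub_one hr ν
      rw [ih (ν := ν - 1) (by linarith) (by push_cast at hn; linarith), sub_add_cancel,
        mul_sub, mul_one, Real.sin_sub_pi] at h1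
      have hν' : (ν : ℂ) ≠ 0 := by exact_mod_cast h0.ne'
      apply mul_left_cancel₀ hν'
      have h3 : r * r ^ (ν - 1) = r ^ ν := by rw [Real.rpow_sub_one hr.ne']; field_simp
      have hG : Real.Gamma ν ≠ 0 := (Real.Gamma_pos_of_pos h0).ne'
      have h4 : r * (2 * π * r ^ (ν - 1) / Real.Gamma ν + 2 * -Real.sin (π * ν) *
          hankelRay r (ν - 1)) + 2 * Real.sin (π * ν) * Real.exp (-r) =
          ν * (2 * π * r ^ ν / Real.Gamma (ν + 1) + 2 * Real.sin (π * ν) * hankelRay r ν) := by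
        rw [Real.Gamma_add_one h0.ne', ← h2, ← h3]
        field_simp
        ring
      have h5 := congrArg (fun y : ℝ => (y : ℂ)) h4
      push_cast at h1 h5 ⊢
      linear_combination h5 - h1

theorem hasSum_pow_mul_hankelCircle (r ν : ℝ) :
    HasSum (fun k : ℕ => ((-r : ℂ) ^ k / k.factorial) * hankelCircle r (ν + k))
      (∫ θ in (-π)..π, Complex.exp ((2 * r * Real.sin θ - ν * θ : ℝ) * Complex.I)) := by
  have h := intervalIntegral.hasSum_integral_of_dominated_convergence (μ := volume)
    (a := -π) (b := π)
    (F := fun (k : ℕ) (θ : ℝ) => ((-r : ℂ) ^ k / k.factorial) *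
      Complex.exp (r * Complex.exp (θ * Complex.I) - (ν + k : ℝ) * θ * Complex.I))
    (f := fun θ : ℝ => Complex.exp ((2 * r * Real.sin θ - ν * θ : ℝ) * Complex.I))
    (fun k _ => |r| ^ k / k.factorial * Real.exp |r|)
    (fun k => Continuous.aestronglyMeasurable (by fun_prop)) ?_ ?_ ?_ ?_
  · simp only [intervalIntegral.integral_const_mul] at h
    exact h
  · refine fun k => .of_forall fun θ _ => ?_
    rw [norm_mul, norm_div, norm_pow, norm_neg, Complex.norm_real, Complex.norm_natCast,
      Real.norm_eq_abs, Complex.norm_exp, Complex.exp_ofReal_mul_I]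
    gcongr
    simp only [Complex.sub_re, Complex.mul_re, Complex.add_re, Complex.ofReal_re,
      Complex.ofReal_im, Complex.I_re, Complex.I_im, Complex.mul_im]
    have : |r * Real.cos θ| ≤ |r| := by
      rw [abs_mul]
      exact mul_le_of_le_one_right (abs_nonneg _) (Real.abs_cos_le_one θ)
    simpa using (le_abs_self _).trans this
  · exact .of_forall fun θ _ => (Real.summable_pow_div_factorial _).mul_right _
  · exact intervalIntegrable_const
  · refine .of_forall fun θ _ => ?_
    have h1 := (NormedSpace.expSeries_div_hasSum_exp (𝔸 := ℂ)
      (-r * Complex.exp (-(θ * Complex.I)))).mul_right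
      (Complex.exp (r * Complex.exp (θ * Complex.I) - ν * θ * Complex.I))
    rw [← Complex.exp_eq_exp_ℂ, ← Complex.exp_add] at h1
    have e : -r * Complex.exp (-(θ * Complex.I)) +
        (r * Complex.exp (θ * Complex.I) - ν * θ * Complex.I) =
        (2 * r * Real.sin θ - ν * θ : ℝ) * Complex.I := by
      have hneg : -(θ * Complex.I) = ((-θ : ℝ) : ℂ) * Complex.I := by push_cast; ring
      rw [hneg, Complex.exp_ofReal_mul_I, Complex.exp_ofReal_mul_I, Real.cos_neg, Real.sin_neg]
      push_cast
      ring
    rw [e] at h1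
    refine h1.congr_fun fun k => ?_
    rw [mul_pow, ← Complex.exp_nat_mul, mul_div_right_comm, mul_assoc (_ / _), ← Complex.exp_add]
    congr 2
    push_cast
    ring

theorem hasSum_pow_mul_hankelRay {r : ℝ} (hr : 0 < r) (ν : ℝ) :
    HasSum (fun k : ℕ => r ^ k / k.factorial * hankelRay r (ν + k))
      (∫ t in Set.Ioi (0 : ℝ), Real.exp (-(2 * r) * Real.sinh t - ν * t)) := by
  have h := hasSum_integral_of_dominated_convergence (μ := volume.restrict (Set.Ioi (0 : ℝ)))
    (F := fun (k : ℕ) (t : ℝ) => r ^ k / k.factorial * Real.exp (-r * Real.exp t - (ν + k) * t))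
    (f := fun t : ℝ => Real.exp (-(2 * r) * Real.sinh t - ν * t))
    (fun k t => r ^ k / k.factorial * Real.exp (-r * Real.exp t - ν * t))
    (fun k => Continuous.aestronglyMeasurable (by fun_prop)) ?_ ?_ ?_ ?_
  · simp only [integral_const_mul] at h
    exact h
  · intro k
    filter_upwards [ae_restrict_mem measurableSet_Ioi] with t ht
    rw [Real.norm_of_nonneg (by positivity)]
    have : 0 ≤ (k : ℝ) * t := mul_nonneg k.cast_nonneg (le_of_lt ht)
    refine mul_le_mul_of_nonneg_left (Real.exp_le_exp.2 ?_) (by positivity)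
    linarith
  · exact .of_forall fun t => (Real.summable_pow_div_factorial _).mul_right _
  · simp only [tsum_mul_right]
    exact (integrableOn_hankelRay hr ν).const_mul _
  · refine .of_forall fun t => ?_
    have h1 := (NormedSpace.expSeries_div_hasSum_exp (𝔸 := ℝ)
      (r * Real.exp (-t))).mul_right (Real.exp (-r * Real.exp t - ν * t))
    rw [← Real.exp_eq_exp_ℝ, ← Real.exp_add] at h1
    have e : r * Real.exp (-t) + (-r * Real.exp t - ν * t) =
        -(2 * r) * Real.sinh t - ν * t := by
      rw [Real.sinh_eq]
      ring
    rw [e] at h1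
    refine h1.congr_fun fun k => ?_
    rw [mul_pow, ← Real.exp_nat_mul, mul_div_right_comm, mul_assoc (_ / _), ← Real.exp_add]
    congr 2
    ring

/-- Schläfli's integral representation of the Bessel function of the first kind. -/
theorem besselJ_eq_schlaefliJ {α : ℝ} (hα : -1 < α) {x : ℝ} (hx : 0 < x) :
    besselJ α x = schlaefliJ α x := by
  have hr : 0 < x / 2 := half_pos hx
  have hc := Complex.hasSum_re (hasSum_pow_mul_hankelCircle (x / 2) α)
  have hray := (hasSum_pow_mul_hankelRay hr α).mul_left (2 * Real.sin (π * α))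
  have h := (hc.sub hray).mul_left (1 / (2 * π))
  have hterm : ∀ k : ℕ, (1 / (2 * π)) * ((((-(x / 2 : ℝ) : ℂ) ^ k / k.factorial) *
      hankelCircle (x / 2) (α + k)).re - 2 * Real.sin (π * α) *
        ((x / 2) ^ k / k.factorial * hankelRay (x / 2) (α + k))) =
      ((-1 : ℝ) ^ k / (k.factorial * Real.Gamma (k + α + 1))) *
        (x / 2) ^ (2 * (k : ℝ) + α) := fun k => by
    have hk : -1 < α + k := by have := k.cast_nonneg (α := ℝ); linarith
    have hG : Real.Gamma (k + α + 1) ≠ 0 := (Real.Gamma_pos_of_pos (by linarith)).ne'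
    have hre : (-(x / 2 : ℝ) : ℂ) ^ k / k.factorial = ((-(x / 2)) ^ k / k.factorial : ℝ) := by
      push_cast
      ring
    have hsin : Real.sin (π * (α + k)) = (-1) ^ k * Real.sin (π * α) := by
      rw [mul_add, mul_comm π (k : ℝ), Real.sin_add_nat_mul_pi]
    have hpow : (x / 2) ^ (2 * (k : ℝ) + α) = (x / 2) ^ k * (x / 2) ^ (α + k) := by
      rw [← Real.rpow_natCast, ← Real.rpow_add hr]
      ring_nf
    have hsq : ((-1 : ℝ) ^ k) * (-1) ^ k = 1 := by rw [← mul_pow]; simp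
    rw [hre, hankelCircle_eq hr hk, ← Complex.ofReal_mul, Complex.ofReal_re, hsin, hpow,
      neg_pow (x / 2), add_comm α k]
    have := Real.pi_ne_zero
    generalize hankelRay (x / 2) (k + α) = R
    generalize (x / 2) ^ (k + α) = P
    generalize (x / 2) ^ k = Q
    field_simp
    linear_combination (Real.Gamma (k + α + 1) * Q * R * Real.sin (π * α)) * hsq
  have hg : Continuous fun θ : ℝ => x * Real.sin θ - α * θ := by fun_prop
  have hcos_cont : Continuous fun θ : ℝ => Real.cos (x * Real.sin θ - α * θ) := by fun_prop
  have heven : ∫ θ in (-π)..π, Real.cos (x * Real.sin θ - α * θ) =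
      2 * ∫ θ in (0 : ℝ)..π, Real.cos (x * Real.sin θ - α * θ) := by
    have hneg := intervalIntegral.integral_comp_neg (a := 0) (b := π)
      fun θ => Real.cos (x * Real.sin θ - α * θ)
    have hcos : ∀ θ : ℝ, Real.cos (x * Real.sin (-θ) - α * -θ) =
        Real.cos (x * Real.sin θ - α * θ) := fun θ => by
      rw [← Real.cos_neg, Real.sin_neg]
      ring_nf
    simp only [hcos, neg_zero] at hneg
    rw [← intervalIntegral.integral_add_adjacent_intervals (b := 0)
      (hcos_cont.intervalIntegrable _ _) (hcos_cont.intervalIntegrable _ _), ← hneg]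
    ring
  simp only [hterm, mul_div_cancel₀ x two_ne_zero] at h
  rw [integral_exp_mul_I _ hg, heven] at h
  rw [besselJ, h.tsum_eq, schlaefliJ, mul_comm α π]
  have := Real.pi_ne_zero
  simp
  field_simp

theorem sup_x_mul_J_sq_add_Y_sq (α : ℝ) (hα : |α| ≤ 1 / 2) :
    IsLUB {y : ℝ | ∃ x > 0, y = x * ((besselJ α x) ^ 2 + (besselY α x) ^ 2)} (2 / π) ∧
      ∀ x > 0, 2 * x * |besselJ α x * besselY α x| ≤ 2 / π := by
  have hα' : -1 < α := by linarith [(abs_le.1 hα).1]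
  have hle : ∀ x > 0, x * (besselJ α x ^ 2 + besselY α x ^ 2) ≤ 2 / π := fun x hx => by
    rw [besselJ_eq_schlaefliJ hα' hx]
    exact mul_schlaefliJ_sq_add_besselY_sq_le hα hx
  refine ⟨⟨?_, fun b hb => ?_⟩, fun x hx => (?_ : _ ≤ _).trans (hle x hx)⟩
  · rintro y ⟨x, hx, rfl⟩
    exact hle x hx
  · refine le_of_tendsto (tendsto_mul_schlaefliJ_sq_add_besselY_sq hα) ?_
    filter_upwards [eventually_gt_atTop 0] with x hx
    rw [← besselJ_eq_schlaefliJ hα' hx]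
    exact hb ⟨x, hx, rfl⟩
  · rw [mul_comm 2 x, mul_assoc, ← sq_abs (besselJ α x), ← sq_abs (besselY α x), abs_mul,
      ← mul_assoc 2]
    exact mul_le_mul_of_nonneg_left (two_mul_le_add_sq _ _) hx.le
end

section
/- For α ≥ -1/2 and x ≥ 1, |J_α(x)| ≤ (4/5)|α² − 1/4| + √(2/(πx)). -/
open Real MeasureTheory

theorem factorial_mul_Gamma_add_half (k : ℕ) :
    (k.factorial : ℝ) * Gamma (k + 1 / 2) = (2 * k).factorial * √π / 4 ^ k := by
  have h := Real.Gamma_mul_Gamma_add_half (k + 1 / 2 : ℝ)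
  rw [show (k : ℝ) + 1 / 2 + 1 / 2 = k + 1 by ring, Real.Gamma_nat_eq_factorial,
    show 2 * ((k : ℝ) + 1 / 2) = ((2 * k : ℕ) : ℝ) + 1 by push_cast; ring,
    Real.Gamma_nat_eq_factorial] at h
  rw [mul_comm, h, show (1 : ℝ) - (((2 * k : ℕ) : ℝ) + 1) = -((2 * k : ℕ) : ℝ) by ring,
    Real.rpow_neg (by norm_num), Real.rpow_natCast, pow_mul]
  norm_num
  ring

theorem integral_Ioo_rpow_mul_one_sub_rpow {u v : ℝ} (hu : 0 < u) (hv : 0 < v) :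
    ∫ s in Set.Ioo (0 : ℝ) 1, s ^ (u - 1) * (1 - s) ^ (v - 1) =
      Gamma u * Gamma v / Gamma (u + v) := by
  have h := Complex.betaIntegral_eq_Gamma_mul_div u v (by simpa) (by simpa)
  rw [Complex.betaIntegral, intervalIntegral.integral_of_le zero_le_one,
    integral_Ioc_eq_integral_Ioo] at h
  rw [← Complex.ofReal_inj, ← integral_complex_ofReal]
  push_cast
  rw [← Complex.Gamma_ofReal, ← Complex.Gamma_ofReal, ← Complex.Gamma_ofReal, Complex.ofReal_add,
    ← h]
  refine setIntegral_congr_fun measurableSet_Ioo fun s hs => ?_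
  rw [Complex.ofReal_cpow hs.1.le, Complex.ofReal_cpow (by linarith [hs.2])]
  push_cast
  rfl

theorem integral_one_sub_sq_rpow_mul_pow {a : ℝ} (ha : -1 < a) (k : ℕ) :
    ∫ t in (0 : ℝ)..1, (1 - t ^ 2) ^ a * t ^ (2 * k) =
      Gamma (k + 1 / 2) * Gamma (a + 1) / (2 * Gamma (k + a + 3 / 2)) := by
  have h := integral_Ioo_rpow_mul_one_sub_rpow (u := k + 1 / 2) (v := a + 1)
    (by positivity) (by linarith)
  have hsub := integral_comp_rpow_Ioi_of_pos
    (g := (Set.Ioo (0 : ℝ) 1).indicator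
      fun s => s ^ ((k : ℝ) + 1 / 2 - 1) * (1 - s) ^ (a + 1 - 1)) (p := 2) (by norm_num)
  rw [setIntegral_indicator measurableSet_Ioo,
    Set.inter_eq_right.mpr Set.Ioo_subset_Ioi_self, h] at hsub
  rw [intervalIntegral.integral_of_le zero_le_one, integral_Ioc_eq_integral_Ioo]
  have h2 : ∫ t in Set.Ioi (0 : ℝ), (2 * t ^ ((2 : ℝ) - 1)) • ((Set.Ioo (0 : ℝ) 1).indicator
      fun s => s ^ ((k : ℝ) + 1 / 2 - 1) * (1 - s) ^ (a + 1 - 1)) (t ^ (2 : ℝ)) =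
      ∫ t in Set.Ioi (0 : ℝ), (Set.Ioo (0 : ℝ) 1).indicator
        (fun t => 2 * ((1 - t ^ 2) ^ a * t ^ (2 * k))) t := by
    refine setIntegral_congr_fun measurableSet_Ioi fun t (ht : 0 < t) => ?_
    simp only [Real.rpow_two]
    by_cases h1 : t < 1
    · rw [Set.indicator_of_mem (by constructor <;> nlinarith),
        Set.indicator_of_mem (by exact ⟨ht, h1⟩), ← Real.rpow_natCast t 2, ← Real.rpow_mul ht.le,
        ← Real.rpow_natCast t (2 * k), smul_eq_mul, add_sub_cancel_right]
      have : t ^ ((2 * k : ℕ) : ℝ) =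
          t ^ ((2 : ℝ) - 1) * t ^ (((2 : ℕ) : ℝ) * ((k : ℝ) + 1 / 2 - 1)) := by
        rw [← Real.rpow_add ht]
        congr 1
        push_cast
        ring
      rw [this]
      ring
    · rw [Set.indicator_of_notMem (fun h => h1 (by nlinarith [h.2])),
        Set.indicator_of_notMem (fun h => h1 h.2), smul_zero]
  rw [h2, setIntegral_indicator measurableSet_Ioo,
    Set.inter_eq_right.mpr Set.Ioo_subset_Ioi_self,
    integral_const_mul] at hsub
  rw [show (k : ℝ) + a + 3 / 2 = k + 1 / 2 + (a + 1) by ring]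
  rw [mul_comm (2 : ℝ) (Gamma _), ← div_div, ← hsub]
  ring

theorem intervalIntegrable_one_sub_sq_rpow {a : ℝ} (ha : -1 < a) :
    IntervalIntegrable (fun t : ℝ => (1 - t ^ 2) ^ a) volume 0 1 := by
  have h := ((intervalIntegral.intervalIntegrable_rpow' (a := 0) (b := 1) ha).comp_sub_left 1).symm
  rw [sub_zero, sub_self] at h
  have h2 := h.mul_continuousOn (g := fun t : ℝ => (1 + t) ^ a) (by
    refine ContinuousOn.rpow_const (by fun_prop) fun t ht => Or.inl ?_
    rw [Set.uIcc_of_le zero_le_one] at ht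
    linarith [ht.1])
  refine h2.congr fun t ht => ?_
  rw [Set.uIoc_of_le zero_le_one] at ht
  rw [← Real.mul_rpow (by linarith [ht.2]) (by linarith [ht.1])]
  ring_nf

/-- Poisson's integral representation. -/
theorem besselJ_eq_integral {α x : ℝ} (hα : -(1 / 2) < α) (hx : 0 < x) :
    besselJ α x = 2 * (x / 2) ^ α / (√π * Gamma (α + 1 / 2)) *
      ∫ t in (0 : ℝ)..1, (1 - t ^ 2) ^ (α - 1 / 2) * cos (x * t) := by
  have ha : -1 < α - 1 / 2 := by linarith
  have hG : 0 < Gamma (α + 1 / 2) := Gamma_pos_of_pos (by linarith)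
  have h_int := intervalIntegrable_one_sub_sq_rpow ha
  have hsum := intervalIntegral.hasSum_integral_of_dominated_convergence
    (μ := volume) (a := 0) (b := 1)
    (F := fun (k : ℕ) t => (1 - t ^ 2) ^ (α - 1 / 2) *
      ((-1) ^ k * (x * t) ^ (2 * k) / (2 * k).factorial))
    (f := fun t => (1 - t ^ 2) ^ (α - 1 / 2) * cos (x * t))
    (fun (k : ℕ) t => (1 - t ^ 2) ^ (α - 1 / 2) * (x ^ (2 * k) / (2 * k).factorial))
    (fun k => by measurability)
    (fun k => by
      refine Filter.Eventually.of_forall fun t ht => ?_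
      rw [Set.uIoc_of_le zero_le_one] at ht
      have h0 : 0 ≤ 1 - t ^ 2 := by nlinarith [ht.1, ht.2]
      rw [norm_mul, Real.norm_of_nonneg (by positivity), norm_div, norm_mul, norm_pow, norm_neg,
        norm_one, one_pow, one_mul, norm_pow, norm_mul, Real.norm_of_nonneg hx.le,
        Real.norm_of_nonneg ht.1.le, Real.norm_natCast]
      have hxt : 0 ≤ x * t := mul_nonneg hx.le ht.1.le
      gcongr
      nlinarith [ht.2])
    (Filter.Eventually.of_forall fun t _ => Summable.mul_left _
      ((Real.summable_pow_div_factorial x).comp_injective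
        (i := fun k : ℕ => 2 * k) (fun _ _ h => by simpa using h)))
    (by
      simp_rw [tsum_mul_left]
      exact h_int.mul_const _)
    (Filter.Eventually.of_forall fun t _ => (Real.hasSum_cos (x * t)).mul_left _)
  rw [besselJ, ← hsum.tsum_eq, ← tsum_mul_left]
  refine tsum_congr fun k => ?_
  have : ∀ t : ℝ, (1 - t ^ 2) ^ (α - 1 / 2) * ((-1) ^ k * (x * t) ^ (2 * k) / (2 * k).factorial) =
      ((-1) ^ k * x ^ (2 * k) / (2 * k).factorial) * ((1 - t ^ 2) ^ (α - 1 / 2) * t ^ (2 * k)) :=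
    fun t => by rw [mul_pow]; ring
  simp_rw [this]
  have h4 : ((2 * k).factorial : ℝ) = k.factorial * Gamma (k + 1 / 2) * 4 ^ k / √π := by
    rw [factorial_mul_Gamma_add_half]
    field_simp
  rw [intervalIntegral.integral_const_mul, integral_one_sub_sq_rpow_mul_pow ha,
    show (k : ℝ) + (α - 1 / 2) + 3 / 2 = k + α + 1 by ring,
    show α - 1 / 2 + 1 = α + 1 / 2 by ring, Real.rpow_add (by positivity),
    show (2 * (k : ℝ)) = ((2 * k : ℕ) : ℝ) by push_cast; ring, Real.rpow_natCast, div_pow,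
    pow_mul (2 : ℝ) 2 k, h4]
  have h1 := Gamma_pos_of_pos (show 0 < (k : ℝ) + α + 1 by linarith [Nat.cast_nonneg (α := ℝ) k])
  have h2 := Gamma_pos_of_pos (show 0 < (k : ℝ) + 1 / 2 by positivity)
  generalize Gamma (k + α + 1) = g₁ at *
  generalize Gamma (k + 1 / 2) = g₂ at *
  generalize Gamma (α + 1 / 2) = g₃ at *
  field_simp
  norm_num

theorem one_sub_sq_re (u v : ℝ) : (1 - ((u : ℂ) + v * Complex.I) ^ 2).re = 1 - u ^ 2 + v ^ 2 := by
  simp [pow_two]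
  ring

theorem norm_one_sub_sq_le {u v : ℝ} (hu : u ∈ Set.Icc (0 : ℝ) 1) :
    ‖1 - ((u : ℂ) + v * Complex.I) ^ 2‖ ≤ 2 + v ^ 2 := by
  have h : ‖(u : ℂ) + v * Complex.I‖ ^ 2 = u ^ 2 + v ^ 2 := by
    rw [← Complex.normSq_eq_norm_sq, Complex.normSq_add_mul_I]
  calc _ ≤ ‖(1 : ℂ)‖ + ‖((u : ℂ) + v * Complex.I) ^ 2‖ := norm_sub_le _ _
    _ = 1 + (u ^ 2 + v ^ 2) := by rw [norm_one, norm_pow, h]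
    _ ≤ 2 + v ^ 2 := by nlinarith [hu.1, hu.2]

/-- The integrand `(1 - z ^ 2) ^ a * exp (i x z)` of the complexified Poisson integral. -/
noncomputable def besselKernel (a x : ℝ) (z : ℂ) : ℂ :=
  (1 - z ^ 2) ^ (a : ℂ) * Complex.exp (Complex.I * x * z)

theorem norm_besselKernel (a x u v : ℝ) (h : 0 < 1 - u ^ 2 + v ^ 2) :
    ‖besselKernel a x (u + v * Complex.I)‖ =
      ‖1 - ((u : ℂ) + v * Complex.I) ^ 2‖ ^ a * exp (-(x * v)) := by
  have h0 : 1 - ((u : ℂ) + v * Complex.I) ^ 2 ≠ 0 := fun h0 => by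
    have := one_sub_sq_re u v
    rw [h0, Complex.zero_re] at this
    linarith
  rw [besselKernel, norm_mul, Complex.norm_cpow_of_ne_zero h0, Complex.norm_exp]
  simp

theorem differentiableAt_besselKernel (a x u v : ℝ) (h : 0 < 1 - u ^ 2 + v ^ 2) :
    DifferentiableAt ℂ (besselKernel a x) (u + v * Complex.I) := by
  unfold besselKernel
  refine DifferentiableAt.mul (DifferentiableAt.cpow_const (by fun_prop) (Or.inl ?_)) (by fun_prop)
  rw [one_sub_sq_re]
  exact h

theorem besselKernel_imag_axis (a x v : ℝ) :
    besselKernel a x (v * Complex.I) = ((1 + v ^ 2) ^ a * exp (-(x * v)) : ℝ) := by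
  rw [besselKernel, Complex.ofReal_mul, Complex.ofReal_cpow (by positivity), Complex.ofReal_exp]
  congr 2
  · rw [mul_pow, Complex.I_sq]; push_cast; ring
  · push_cast
    linear_combination (x * v : ℂ) * Complex.I_mul_I

theorem re_besselKernel_ofReal (a x : ℝ) {t : ℝ} (ht : t ∈ Set.Icc (0 : ℝ) 1) :
    (besselKernel a x t).re = (1 - t ^ 2) ^ a * cos (x * t) := by
  have h : (1 - (t : ℂ) ^ 2) ^ (a : ℂ) = ((1 - t ^ 2) ^ a : ℝ) := by
    rw [Complex.ofReal_cpow (by nlinarith [ht.1, ht.2])]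
    push_cast
    rfl
  rw [besselKernel, h, Complex.re_ofReal_mul,
    show Complex.I * x * t = ((x * t : ℝ) : ℂ) * Complex.I by push_cast; ring,
    Complex.exp_ofReal_mul_I_re]

/-- The majorant of the kernel on the half-line `1 + i v`. -/
noncomputable def sideBound (a x v : ℝ) : ℝ :=
  2 ^ a * (v ^ a * exp (-(x * v)) + max a 0 / 8 * (v ^ (a + 2) * exp (-(x * v))))

theorem norm_besselKernel_side_le {a x v : ℝ} (ha : a ≤ 2) (hv : 0 < v) :
    ‖besselKernel a x (1 + v * Complex.I)‖ ≤ sideBound a x v := by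
  have h := norm_besselKernel a x 1 v (by nlinarith)
  rw [Complex.ofReal_one] at h
  have hn : ‖1 - (1 + (v : ℂ) * Complex.I) ^ 2‖ = v * (2 * (1 + v ^ 2 / 4) ^ (1 / 2 : ℝ)) := by
    rw [show 1 - (1 + (v : ℂ) * Complex.I) ^ 2 = v * (v + (-2 : ℝ) * Complex.I) by
      push_cast; linear_combination (-v ^ 2 : ℂ) * Complex.I_sq, norm_mul, Complex.norm_real,
      Real.norm_of_nonneg hv.le]
    congr 1
    rw [Complex.norm_add_mul_I, ← Real.sqrt_eq_rpow,
      Real.sqrt_eq_iff_mul_self_eq (by positivity) (by positivity), mul_mul_mul_comm,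
      Real.mul_self_sqrt (by positivity)]
    ring
  rw [h, hn, Real.mul_rpow hv.le (by positivity), Real.mul_rpow (by norm_num) (by positivity),
    ← Real.rpow_mul (by positivity), sideBound]
  have hb : (1 + v ^ 2 / 4) ^ (1 / 2 * a) ≤ 1 + max a 0 / 8 * v ^ 2 := by
    rcases le_total a 0 with h0 | h0
    · rw [max_eq_right h0]
      have := Real.rpow_le_one_of_one_le_of_nonpos (x := 1 + v ^ 2 / 4) (z := 1 / 2 * a)
        (by nlinarith) (by linarith)
      linarith
    · rw [max_eq_left h0]
      have := rpow_one_add_le_one_add_mul_self (s := v ^ 2 / 4) (p := 1 / 2 * a)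
        (by nlinarith) (by linarith) (by linarith)
      linarith
  rw [Real.rpow_add hv, Real.rpow_two]
  calc _ = 2 ^ a * v ^ a * exp (-(x * v)) * (1 + v ^ 2 / 4) ^ (1 / 2 * a) := by ring
    _ ≤ 2 ^ a * v ^ a * exp (-(x * v)) * (1 + max a 0 / 8 * v ^ 2) := by gcongr
    _ = _ := by ring

theorem integrableOn_rpow_mul_exp_neg_mul {a x : ℝ} (ha : -1 < a) (hx : 0 < x) :
    IntegrableOn (fun v : ℝ => v ^ a * exp (-(x * v))) (Set.Ioi 0) := by
  simpa using integrableOn_rpow_mul_exp_neg_mul_rpow ha one_pos hx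

theorem integrableOn_sideBound {a x : ℝ} (ha : -1 < a) (hx : 0 < x) :
    IntegrableOn (sideBound a x) (Set.Ioi 0) :=
  ((integrableOn_rpow_mul_exp_neg_mul ha hx).add
    ((integrableOn_rpow_mul_exp_neg_mul (by linarith) hx).const_mul _)).const_mul _

theorem integral_sideBound {a x : ℝ} (ha : -1 < a) (hx : 0 < x) :
    ∫ v in Set.Ioi 0, sideBound a x v =
      2 ^ a * ((1 / x) ^ (a + 1) * Gamma (a + 1) +
        max a 0 / 8 * ((1 / x) ^ (a + 3) * Gamma (a + 3))) := by
  have h1 := Real.integral_rpow_mul_exp_neg_mul_Ioi (a := a + 1) (by linarith) hx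
  have h3 := Real.integral_rpow_mul_exp_neg_mul_Ioi (a := a + 3) (by linarith) hx
  rw [add_sub_cancel_right] at h1
  rw [show a + 3 - 1 = a + 2 by ring] at h3
  simp only [sideBound]
  rw [integral_const_mul, integral_add (integrableOn_rpow_mul_exp_neg_mul ha hx)
    ((integrableOn_rpow_mul_exp_neg_mul (by linarith) hx).const_mul _), integral_const_mul, h1, h3]

theorem sideBound_nonneg {a x v : ℝ} (hv : 0 < v) : 0 ≤ sideBound a x v := by
  unfold sideBound
  positivity

/-- The kernel on a horizontal edge at height `v ≥ 1`. -/
theorem norm_besselKernel_top_le {a x u v : ℝ} (ha : a ≤ 2) (hu : u ∈ Set.Icc (0 : ℝ) 1)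
    (hv : 1 ≤ v) :
    ‖besselKernel a x (u + v * Complex.I)‖ ≤ 9 * (v ^ (4 : ℝ) * exp (-x * v)) := by
  rw [norm_besselKernel a x u v (by nlinarith [hu.1, hu.2]), ← mul_assoc, neg_mul]
  have h1 : 1 ≤ ‖1 - ((u : ℂ) + v * Complex.I) ^ 2‖ := by
    refine le_trans ?_ (Complex.re_le_norm _)
    rw [one_sub_sq_re]
    nlinarith [hu.1, hu.2]
  gcongr
  calc _ ≤ ‖1 - ((u : ℂ) + v * Complex.I) ^ 2‖ ^ (2 : ℝ) :=
        Real.rpow_le_rpow_of_exponent_le h1 ha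
    _ ≤ (3 * v ^ 2) ^ (2 : ℝ) := by
        gcongr
        exact (norm_one_sub_sq_le hu).trans (by nlinarith)
    _ = 9 * v ^ (4 : ℝ) := by
        rw [Real.rpow_two, show (4 : ℝ) = (4 : ℕ) by norm_num, Real.rpow_natCast]
        ring

theorem abs_re_integral_besselKernel_le_add {a x δ T : ℝ} (ha : -1 < a) (ha2 : a ≤ 2)
    (hx : 0 < x) (hδ : 0 < δ) (hδT : δ ≤ T) (hT : 1 ≤ T) :
    |(∫ t in (0 : ℝ)..1, besselKernel a x (t + δ * Complex.I)).re| ≤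
      (∫ v in Set.Ioi 0, sideBound a x v) + 9 * (T ^ (4 : ℝ) * exp (-x * T)) := by
  have h := Complex.integral_boundary_rect_eq_zero_of_differentiableOn (besselKernel a x)
    (δ * Complex.I) (1 + T * Complex.I) (by
      intro z hz
      rw [Complex.mem_reProdIm] at hz
      simp only [Complex.mul_re, Complex.mul_im, Complex.add_re, Complex.add_im, Complex.ofReal_re,
        Complex.ofReal_im, Complex.I_re, Complex.I_im, Complex.one_re, Complex.one_im, mul_zero,
        mul_one, sub_self, add_zero, zero_add, Set.uIcc_of_le zero_le_one,
        Set.uIcc_of_le hδT] at hz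
      rw [← Complex.re_add_im z]
      exact (differentiableAt_besselKernel a x _ _
        (by nlinarith [hz.1.1, hz.1.2, hz.2.1])).differentiableWithinAt)
  simp only [Complex.mul_re, Complex.mul_im, Complex.add_re, Complex.add_im, Complex.ofReal_re,
    Complex.ofReal_im, Complex.I_re, Complex.I_im, Complex.one_re, Complex.one_im, mul_zero,
    mul_one, sub_self, add_zero, zero_add, Complex.ofReal_zero, Complex.ofReal_one,
    besselKernel_imag_axis, intervalIntegral.integral_ofReal, smul_eq_mul] at h
  have htop : ‖∫ t in (0 : ℝ)..1, besselKernel a x (t + T * Complex.I)‖ ≤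
      9 * (T ^ (4 : ℝ) * exp (-x * T)) := by
    have := intervalIntegral.norm_integral_le_of_norm_le_const (a := 0) (b := 1)
      (f := fun t : ℝ => besselKernel a x (t + T * Complex.I))
      (C := 9 * (T ^ (4 : ℝ) * exp (-x * T))) fun t ht => by
        rw [Set.uIoc_of_le zero_le_one] at ht
        exact norm_besselKernel_top_le ha2 ⟨ht.1.le, ht.2⟩ hT
    simpa using this
  have hside : ‖∫ v in δ..T, besselKernel a x (1 + v * Complex.I)‖ ≤
      ∫ v in Set.Ioi 0, sideBound a x v := by
    have hsub : Set.Ioc δ T ⊆ Set.Ioi 0 := fun v hv => hδ.trans hv.1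
    refine (intervalIntegral.norm_integral_le_of_norm_le (g := sideBound a x) hδT
      (Filter.Eventually.of_forall fun v hv =>
        norm_besselKernel_side_le ha2 (hδ.trans hv.1)) ?_).trans ?_
    · rw [intervalIntegrable_iff_integrableOn_Ioc_of_le hδT]
      exact (integrableOn_sideBound ha hx).mono_set hsub
    · rw [intervalIntegral.integral_of_le hδT]
      exact setIntegral_mono_set (integrableOn_sideBound ha hx)
        ((ae_restrict_mem measurableSet_Ioi).mono fun v hv => sideBound_nonneg hv)
        hsub.eventuallyLE
  have hre := congrArg Complex.re h
  simp only [Complex.add_re, Complex.sub_re, Complex.mul_re, Complex.I_re, Complex.I_im,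
    Complex.ofReal_re, Complex.ofReal_im, Complex.zero_re] at hre
  have h1 := (Complex.abs_re_le_norm _).trans htop
  have h2 := (Complex.abs_im_le_norm _).trans hside
  rw [abs_le] at *
  constructor <;> linarith [h1.1, h1.2, h2.1, h2.2]

theorem abs_re_integral_besselKernel_le {a x δ : ℝ} (ha : -1 < a) (ha2 : a ≤ 2)
    (hx : 0 < x) (hδ : 0 < δ) :
    |(∫ t in (0 : ℝ)..1, besselKernel a x (t + δ * Complex.I)).re| ≤
      ∫ v in Set.Ioi 0, sideBound a x v := by
  have hlim := ((tendsto_rpow_mul_exp_neg_mul_atTop_nhds_zero 4 x hx).const_mul 9).const_add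
    (∫ v in Set.Ioi 0, sideBound a x v)
  rw [mul_zero, add_zero] at hlim
  refine ge_of_tendsto hlim ?_
  filter_upwards [Filter.eventually_ge_atTop δ, Filter.eventually_ge_atTop 1] with T h1 h2
  exact abs_re_integral_besselKernel_le_add ha ha2 hx hδ h1 h2

theorem norm_besselKernel_le {a x δ t : ℝ} (ha2 : a ≤ 2) (hx : 0 < x) (hδ : 0 < δ) (hδ1 : δ ≤ 1)
    (ht : t ∈ Set.Ico (0 : ℝ) 1) :
    ‖besselKernel a x (t + δ * Complex.I)‖ ≤ (1 - t ^ 2) ^ a + 9 := by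
  have ht0 : 0 < 1 - t ^ 2 := by nlinarith [ht.1, ht.2]
  rw [norm_besselKernel a x t δ (by positivity)]
  have hle := norm_one_sub_sq_le (v := δ) ⟨ht.1, ht.2.le⟩
  have hge := Complex.re_le_norm (1 - ((t : ℂ) + δ * Complex.I) ^ 2)
  rw [one_sub_sq_re] at hge
  have hexp : exp (-(x * δ)) ≤ 1 := Real.exp_le_one_iff.mpr (by nlinarith)
  refine (mul_le_of_le_one_right (by positivity) hexp).trans ?_
  rcases le_total a 0 with h0 | h0
  · have := Real.rpow_le_rpow_of_nonpos ht0 (le_trans (by nlinarith) hge) h0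
    linarith
  · have h3 : ‖1 - ((t : ℂ) + δ * Complex.I) ^ 2‖ ^ a ≤ 3 ^ a := by
      gcongr
      nlinarith
    have h9 : (3 : ℝ) ^ a ≤ 3 ^ (2 : ℝ) := Real.rpow_le_rpow_of_exponent_le (by norm_num) ha2
    have := Real.rpow_nonneg ht0.le a
    norm_num at h9
    linarith

theorem abs_integral_one_sub_sq_rpow_mul_cos_le {a x : ℝ} (ha : -1 < a) (ha2 : a ≤ 2)
    (hx : 0 < x) :
    |∫ t in (0 : ℝ)..1, (1 - t ^ 2) ^ a * cos (x * t)| ≤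
      2 ^ a * ((1 / x) ^ (a + 1) * Gamma (a + 1) +
        max a 0 / 8 * ((1 / x) ^ (a + 3) * Gamma (a + 3))) := by
  have h_int := intervalIntegrable_one_sub_sq_rpow ha
  rw [← integral_sideBound ha hx]
  have hne : ∀ᵐ t : ℝ, t ≠ 1 := by simp [ae_iff, measure_singleton]
  have hmem : ∀ {t : ℝ}, t ≠ 1 → t ∈ Set.uIoc (0 : ℝ) 1 → t ∈ Set.Ico (0 : ℝ) 1 := fun h ht => by
    rw [Set.uIoc_of_le zero_le_one] at ht
    exact ⟨ht.1.le, lt_of_le_of_ne ht.2 h⟩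
  have hlim : Filter.Tendsto
      (fun δ : ℝ => ∫ t in (0 : ℝ)..1, besselKernel a x (t + δ * Complex.I))
      (nhdsWithin 0 (Set.Ioi 0)) (nhds (∫ t in (0 : ℝ)..1, besselKernel a x t)) := by
    refine intervalIntegral.tendsto_integral_filter_of_dominated_convergence
      (fun t => (1 - t ^ 2) ^ a + 9) ?_ ?_ (h_int.add intervalIntegrable_const) ?_
    · refine Filter.Eventually.of_forall fun δ => ?_
      unfold besselKernel
      exact Measurable.aestronglyMeasurable (by fun_prop)
    · filter_upwards [Ioc_mem_nhdsGT (zero_lt_one' ℝ)] with δ hδ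
      filter_upwards [hne] with t ht1 ht
      exact norm_besselKernel_le ha2 hx hδ.1 hδ.2 (hmem ht1 ht)
    · filter_upwards [hne] with t ht1 ht
      have ht' := hmem ht1 ht
      have hc := (differentiableAt_besselKernel a x t 0
        (by nlinarith [ht'.1, ht'.2])).continuousAt
      have hg : ContinuousAt (fun δ : ℝ => (t : ℂ) + δ * Complex.I) 0 := by fun_prop
      have := (ContinuousAt.comp (f := fun δ : ℝ => (t : ℂ) + δ * Complex.I) hc hg).tendsto
      simp only [Function.comp_def, Complex.ofReal_zero, zero_mul, add_zero] at this
      exact this.mono_left nhdsWithin_le_nhds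
  have hre : (∫ t in (0 : ℝ)..1, besselKernel a x t).re =
      ∫ t in (0 : ℝ)..1, (1 - t ^ 2) ^ a * cos (x * t) := by
    have hi : IntervalIntegrable (fun t : ℝ => besselKernel a x t) volume 0 1 := by
      refine (h_int.add (intervalIntegrable_const (c := (9 : ℝ)))).mono_fun ?_ ?_
      · unfold besselKernel
        exact Measurable.aestronglyMeasurable (by fun_prop)
      · rw [Filter.EventuallyLE, ae_restrict_iff' measurableSet_uIoc]
        filter_upwards [hne] with t ht1 ht
        have ht' := hmem ht1 ht
        have ht0 : 0 < 1 - t ^ 2 := by nlinarith [ht'.1, ht'.2]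
        have hn := norm_besselKernel a x t 0 (by nlinarith)
        have h2 : (1 - (t : ℂ) ^ 2) = ((1 - t ^ 2 : ℝ) : ℂ) := by push_cast; ring
        simp only [Complex.ofReal_zero, zero_mul, add_zero, mul_zero, neg_zero, Real.exp_zero,
          mul_one, h2, Complex.norm_real, Real.norm_of_nonneg ht0.le] at hn
        rw [hn, Real.norm_of_nonneg (by positivity)]
        linarith
    rw [← Complex.reCLM_apply, ← ContinuousLinearMap.intervalIntegral_comp_comm _ hi]
    refine intervalIntegral.integral_congr fun t ht => ?_
    rw [Set.uIcc_of_le zero_le_one] at ht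
    exact re_besselKernel_ofReal a x ht
  rw [← hre]
  refine le_of_tendsto ((Complex.continuous_re.tendsto _).comp hlim).abs ?_
  filter_upwards [self_mem_nhdsWithin] with δ hδ
  exact abs_re_integral_besselKernel_le ha ha2 hx hδ

theorem besselJ_neg_half {x : ℝ} (hx : 0 < x) :
    besselJ (-(1 / 2)) x = √(2 / (π * x)) * cos x := by
  rw [besselJ, ← (Real.hasSum_cos x).tsum_eq, ← tsum_mul_left]
  refine tsum_congr fun k => ?_
  have h := factorial_mul_Gamma_add_half k
  rw [show (k : ℝ) + -(1 / 2) + 1 = k + 1 / 2 by ring, h, Real.rpow_add (by positivity),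
    Real.rpow_neg (by positivity), ← Real.sqrt_eq_rpow,
    show (2 * (k : ℝ)) = ((2 * k : ℕ) : ℝ) by push_cast; ring, Real.rpow_natCast, div_pow,
    pow_mul (2 : ℝ) 2 k, ← Real.sqrt_inv, show 2 / (π * x) = π⁻¹ * (x / 2)⁻¹ by field_simp,
    Real.sqrt_mul (by positivity), Real.sqrt_inv π]
  norm_num
  field_simp

/-- Bound by the modulus of the leading Hankel term, with its first correction. -/
theorem abs_besselJ_le_hankel {α x : ℝ} (hα : -(1 / 2) < α) (hα2 : α ≤ 5 / 2) (hx : 0 < x) :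
    |besselJ α x| ≤
      √(2 / (π * x)) * (1 + max (α - 1 / 2) 0 * (α + 1 / 2) * (α + 3 / 2) / (8 * x ^ 2)) := by
  have hG : 0 < Gamma (α + 1 / 2) := Gamma_pos_of_pos (by linarith)
  have h := abs_integral_one_sub_sq_rpow_mul_cos_le (a := α - 1 / 2) (by linarith) (by linarith) hx
  have hG3 : Gamma (α - 1 / 2 + 3) = (α + 3 / 2) * ((α + 1 / 2) * Gamma (α + 1 / 2)) := by
    rw [← Real.Gamma_add_one (by linarith), show α + 1 / 2 + 1 = α + 3 / 2 by ring,
      ← Real.Gamma_add_one (by linarith)]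
    ring_nf
  rw [hG3, show α - 1 / 2 + 1 = α + 1 / 2 by ring,
    show α - 1 / 2 + 3 = α + 1 / 2 + (2 : ℕ) by push_cast; ring,
    Real.rpow_add (by positivity) (α + 1 / 2) ((2 : ℕ) : ℝ), Real.rpow_natCast] at h
  rw [besselJ_eq_integral hα hx, abs_mul, abs_of_pos (by positivity)]
  refine (mul_le_mul_of_nonneg_left h (by positivity)).trans_eq ?_
  have hpow : 2 * (x / 2) ^ α * 2 ^ (α - 1 / 2) * (1 / x) ^ (α + 1 / 2) = √2 / √x := by
    rw [Real.div_rpow hx.le (by norm_num), Real.div_rpow zero_le_one hx.le, Real.one_rpow,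
      Real.rpow_sub (by norm_num), Real.rpow_add hx, ← Real.sqrt_eq_rpow, ← Real.sqrt_eq_rpow]
    field_simp
    rw [Real.sq_sqrt (by norm_num)]
  rw [Real.sqrt_div (by norm_num), Real.sqrt_mul pi_pos.le,
    show √2 / (√π * √x) = √2 / √x / √π by field_simp, ← hpow]
  generalize Gamma (α + 1 / 2) = G at *
  generalize (1 / x) ^ (α + 1 / 2) = P at *
  generalize (2 : ℝ) ^ (α - 1 / 2) = Q at *
  field_simp

theorem sqrt_two_div_pi_mul_le {x : ℝ} (hx : 1 ≤ x) : √(2 / (π * x)) ≤ 4 / 5 := by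
  rw [Real.sqrt_le_left (by norm_num), div_le_iff₀ (by positivity)]
  nlinarith [pi_gt_d2]

theorem abs_besselJ_le_of_le_five_halves {α x : ℝ} (hα : -(1 / 2) < α) (hα2 : α ≤ 5 / 2)
    (hx : 1 ≤ x) :
    |besselJ α x| ≤ 4 / 5 * |α ^ 2 - 1 / 4| + √(2 / (π * x)) := by
  have hx0 : 0 < x := by linarith
  refine (abs_besselJ_le_hankel hα hα2 hx0).trans ?_
  rw [mul_add, mul_one, add_comm]
  refine add_le_add_left (mul_le_mul (sqrt_two_div_pi_mul_le hx) ?_ ?_ (by norm_num)) _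
  · rw [div_le_iff₀ (by positivity)]
    rcases le_total (α - 1 / 2) 0 with h | h
    · rw [max_eq_right h]
      simp only [zero_mul]
      positivity
    · rw [max_eq_left h, abs_of_nonneg (by nlinarith)]
      have hm : 0 ≤ α ^ 2 - 1 / 4 := by nlinarith
      calc (α - 1 / 2) * (α + 1 / 2) * (α + 3 / 2) = (α ^ 2 - 1 / 4) * (α + 3 / 2) := by ring
        _ ≤ (α ^ 2 - 1 / 4) * (8 * x ^ 2) := by
          gcongr
          nlinarith
  · have := le_max_right (α - 1 / 2) 0
    have h1 : 0 < α + 1 / 2 := by linarith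
    have h3 : 0 < α + 3 / 2 := by linarith
    positivity

theorem half_le_Gamma {y : ℝ} (hy : 1 ≤ y) : 1 / 2 ≤ Gamma y := by
  have key : ∀ z : ℝ, 2 ≤ z → 1 ≤ Gamma z := fun z hz => by
    rw [← Real.Gamma_two]
    exact Real.Gamma_strictMonoOn_Ici.monotoneOn (by simp) hz hz
  rcases le_total 2 y with h | h
  · linarith [key y h]
  · have h1 := key (y + 1) (by linarith)
    have h0 : 0 < Gamma y := Gamma_pos_of_pos (by linarith)
    rw [Real.Gamma_add_one (by linarith)] at h1
    nlinarith

theorem abs_besselJ_le_rpow_div_Gamma {α x : ℝ} (hα : 1 / 2 ≤ α) (hx : 0 < x) :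
    |besselJ α x| ≤ 2 * (x / 2) ^ α / Gamma (α + 1 / 2) := by
  have hG : 0 < Gamma (α + 1 / 2) := Gamma_pos_of_pos (by linarith)
  have h_int : |∫ t in (0 : ℝ)..1, (1 - t ^ 2) ^ (α - 1 / 2) * cos (x * t)| ≤ 1 := by
    have := intervalIntegral.norm_integral_le_of_norm_le_const (a := 0) (b := 1) (C := 1)
      (f := fun t : ℝ => (1 - t ^ 2) ^ (α - 1 / 2) * cos (x * t)) fun t ht => by
        rw [Set.uIoc_of_le zero_le_one] at ht
        have h0 : 0 ≤ 1 - t ^ 2 := by nlinarith [ht.1, ht.2]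
        rw [norm_mul, Real.norm_of_nonneg (by positivity), Real.norm_eq_abs]
        exact mul_le_one₀ (Real.rpow_le_one h0 (by nlinarith) (by linarith)) (abs_nonneg _)
          (abs_cos_le_one _)
    simpa using this
  rw [besselJ_eq_integral (by linarith) hx, abs_mul, abs_of_pos (by positivity)]
  refine (mul_le_of_le_one_right (by positivity) h_int).trans ?_
  gcongr
  exact le_mul_of_one_le_left hG.le (Real.one_le_sqrt.mpr (by linarith [pi_gt_three]))

/-- The entire factor of the Bessel function: `J_α(x) = (x / 2) ^ α * g_α(x² / 4)`. -/
noncomputable def besselEntire (α y : ℝ) : ℝ :=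
  ∑' k : ℕ, ((-1 : ℝ) ^ k / (k.factorial * Gamma (k + α + 1))) * y ^ k

theorem abs_besselCoeff_le {α : ℝ} (hα : 0 ≤ α) (k : ℕ) :
    |(-1 : ℝ) ^ k / (k.factorial * Gamma (k + α + 1))| ≤ 2 / k.factorial := by
  have hG := half_le_Gamma (y := k + α + 1) (by linarith [Nat.cast_nonneg (α := ℝ) k])
  have hk : (0 : ℝ) < k.factorial := by positivity
  rw [abs_div, abs_pow, abs_neg, abs_one, one_pow, abs_of_pos (by positivity),
    div_le_div_iff₀ (by positivity) hk]
  nlinarith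

theorem summable_besselEntire {α : ℝ} (hα : 0 ≤ α) (y : ℝ) :
    Summable fun k : ℕ => ((-1 : ℝ) ^ k / (k.factorial * Gamma (k + α + 1))) * y ^ k := by
  refine Summable.of_norm_bounded ((Real.summable_pow_div_factorial |y|).mul_left 2) fun k => ?_
  rw [norm_mul, norm_pow, Real.norm_eq_abs, Real.norm_eq_abs]
  refine (mul_le_mul_of_nonneg_right (abs_besselCoeff_le hα k) (by positivity)).trans_eq (by ring)

theorem hasSum_besselEntire_deriv {α : ℝ} (hα : 0 ≤ α) (y : ℝ) :
    HasSum (fun k : ℕ => ((-1 : ℝ) ^ k / (k.factorial * Gamma (k + α + 1))) *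
      (k * y ^ (k - 1))) (-besselEntire (α + 1) y) := by
  rw [← hasSum_nat_add_iff' 1]
  simp only [Finset.range_one, Finset.sum_singleton, Nat.cast_zero, zero_mul, mul_zero, sub_zero]
  refine ((summable_besselEntire (by linarith : 0 ≤ α + 1) y).hasSum.neg).congr_fun fun k => ?_
  rw [Nat.add_sub_cancel, Nat.factorial_succ]
  push_cast
  rw [show (k : ℝ) + 1 + α + 1 = k + (α + 1) + 1 by ring]
  field_simp
  ring

theorem hasDerivAt_besselEntire {α : ℝ} (hα : 0 ≤ α) (y : ℝ) :
    HasDerivAt (besselEntire α) (-besselEntire (α + 1) y) y := by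
  rw [← (hasSum_besselEntire_deriv hα y).tsum_eq]
  have hy : y ∈ Metric.ball (0 : ℝ) (|y| + 1) := by simp
  refine hasDerivAt_tsum_of_isPreconnected (t := Metric.ball (0 : ℝ) (|y| + 1))
    (u := fun k : ℕ => 2 / k.factorial * (k * (|y| + 1) ^ (k - 1))) ?_ Metric.isOpen_ball
    (convex_ball _ _).isPreconnected (fun k z _ => (hasDerivAt_pow k z).const_mul _) ?_ hy
    (summable_besselEntire hα y) hy
  · rw [← summable_nat_add_iff 1]
    refine ((Real.summable_pow_div_factorial (|y| + 1)).mul_left 2).congr fun k => ?_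
    rw [Nat.add_sub_cancel, Nat.factorial_succ]
    push_cast
    field_simp
  · intro k z hz
    rw [Metric.mem_ball, dist_zero_right, Real.norm_eq_abs] at hz
    rw [norm_mul, norm_mul, norm_pow, Real.norm_eq_abs, Real.norm_eq_abs z, Real.norm_natCast]
    gcongr
    exact abs_besselCoeff_le hα k

theorem besselEntire_recurrence {α : ℝ} (hα : 0 ≤ α) (y : ℝ) :
    besselEntire α y = (α + 1) * besselEntire (α + 1) y - y * besselEntire (α + 2) y := by
  have h1 := (summable_besselEntire (by linarith : 0 ≤ α + 1) y).hasSum.mul_left (α + 1)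
  have h2 := (hasSum_besselEntire_deriv (by linarith : 0 ≤ α + 1) y).mul_left y
  have h := h1.add h2
  rw [show α + 1 + 1 = α + 2 by ring] at h
  rw [sub_eq_add_neg, ← mul_neg]
  refine Eq.trans (tsum_congr fun k => ?_) h.tsum_eq
  have hpos : 0 < (k : ℝ) + α + 1 := by positivity
  have hG := Gamma_pos_of_pos hpos
  have hy : y * (k * y ^ (k - 1)) = k * y ^ k := by
    cases k with
    | zero => simp
    | succ n => rw [Nat.add_sub_cancel, pow_succ]; ring
  rw [show (k : ℝ) + (α + 1) + 1 = k + α + 1 + 1 by ring, Real.Gamma_add_one hpos.ne',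
    mul_left_comm y, hy]
  generalize Gamma (k + α + 1) = G at *
  field_simp
  ring

theorem besselJ_eq_rpow_mul_besselEntire {α x : ℝ} (hα : 0 < α) (hx : 0 ≤ x) :
    besselJ α x = (x / 2) ^ α * besselEntire α (x ^ 2 / 4) := by
  rw [besselJ, besselEntire, ← tsum_mul_left]
  refine tsum_congr fun k => ?_
  rcases hx.eq_or_lt with rfl | hx
  · rw [zero_div, Real.zero_rpow (by positivity), Real.zero_rpow (by positivity)]
    ring
  · rw [Real.rpow_add (by positivity), show (2 * (k : ℝ)) = ((2 * k : ℕ) : ℝ) by push_cast; ring,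
      Real.rpow_natCast, pow_mul]
    ring

theorem besselJ_zero_right {α : ℝ} (hα : 0 < α) : besselJ α 0 = 0 := by
  rw [besselJ_eq_rpow_mul_besselEntire hα le_rfl, zero_div, Real.zero_rpow hα.ne', zero_mul]

theorem continuousOn_besselJ {α : ℝ} (hα : 0 < α) : ContinuousOn (besselJ α) (Set.Ici 0) := by
  have h : Continuous (besselEntire α) :=
    continuous_iff_continuousAt.mpr fun y => (hasDerivAt_besselEntire hα.le y).continuousAt
  refine ContinuousOn.congr (f := fun x => (x / 2) ^ α * besselEntire α (x ^ 2 / 4)) ?_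
    fun x hx => besselJ_eq_rpow_mul_besselEntire hα hx
  refine Continuous.continuousOn (Continuous.mul ?_ (by fun_prop))
  exact Continuous.rpow_const (by fun_prop) fun _ => Or.inr hα.le

theorem hasDerivAt_besselJ {α x : ℝ} (hα : 0 < α) (hx : 0 < x) :
    HasDerivAt (besselJ α) (α / x * besselJ α x - besselJ (α + 1) x) x := by
  have h1 : HasDerivAt (fun x : ℝ => (x / 2) ^ α) (1 / 2 * α * (x / 2) ^ (α - 1)) x :=
    ((hasDerivAt_id x).div_const 2).rpow_const (Or.inl (by simp [hx.ne']))
  have h2 : HasDerivAt (fun x : ℝ => x ^ 2 / 4) (x / 2) x := by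
    refine ((hasDerivAt_pow 2 x).div_const 4).congr_deriv ?_
    push_cast
    ring
  have h3 := h1.mul ((hasDerivAt_besselEntire hα.le (x ^ 2 / 4)).comp x h2)
  refine (h3.congr_of_eventuallyEq ?_).congr_deriv ?_
  · filter_upwards [lt_mem_nhds hx] with z hz
    exact besselJ_eq_rpow_mul_besselEntire hα (le_of_lt hz)
  · rw [besselJ_eq_rpow_mul_besselEntire hα hx.le,
      besselJ_eq_rpow_mul_besselEntire (by linarith : 0 < α + 1) hx.le,
      Real.rpow_sub (by positivity), Real.rpow_add (by positivity), Real.rpow_one]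
    simp only [Function.comp]
    field_simp
    ring

theorem besselJ_add_besselJ_add_two {α x : ℝ} (hα : 0 < α) (hx : 0 < x) :
    besselJ α x + besselJ (α + 2) x = 2 * (α + 1) / x * besselJ (α + 1) x := by
  rw [besselJ_eq_rpow_mul_besselEntire hα hx.le,
    besselJ_eq_rpow_mul_besselEntire (by linarith : 0 < α + 1) hx.le,
    besselJ_eq_rpow_mul_besselEntire (by linarith : 0 < α + 2) hx.le,
    besselEntire_recurrence hα.le, Real.rpow_add (by positivity), Real.rpow_add (by positivity),
    Real.rpow_one, Real.rpow_two]
  field_simp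
  ring

theorem hasDerivAt_besselJ_add_one {α x : ℝ} (hα : 0 < α) (hx : 0 < x) :
    HasDerivAt (besselJ (α + 1)) ((besselJ α x - besselJ (α + 2) x) / 2) x := by
  refine (hasDerivAt_besselJ (by linarith) hx).congr_deriv ?_
  have h := besselJ_add_besselJ_add_two hα hx
  rw [show α + 1 + 1 = α + 2 by ring]
  linear_combination -h / 2

/-- Partial sums of `J_ν² + 2 ∑ J_{ν+k}²`, whose derivative telescopes. -/
noncomputable def besselSqSum (ν : ℝ) (n : ℕ) (x : ℝ) : ℝ :=
  besselJ ν x ^ 2 + 2 * ∑ k ∈ Finset.range n, besselJ (ν + k + 1) x ^ 2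

theorem hasDerivAt_besselSqSum {ν x : ℝ} (hν : 0 < ν) (hx : 0 < x) (n : ℕ) :
    HasDerivAt (besselSqSum ν n)
      (2 * ν / x * besselJ ν x ^ 2 - 2 * (besselJ (ν + n) x * besselJ (ν + n + 1) x)) x := by
  induction n with
  | zero =>
    have h : HasDerivAt (fun x => besselJ ν x ^ 2) _ x := (hasDerivAt_besselJ hν hx).pow 2
    refine (h.congr_of_eventuallyEq ?_).congr_deriv ?_
    · exact Filter.Eventually.of_forall fun z => by simp [besselSqSum]
    · simp
      ring
  | succ n ih =>
    have hd := ((hasDerivAt_besselJ_add_one (α := ν + n) (by positivity) hx).pow 2).const_mul 2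
    refine ((ih.add hd).congr_of_eventuallyEq ?_).congr_deriv ?_
    · refine Filter.Eventually.of_forall fun z => ?_
      simp only [besselSqSum, Finset.sum_range_succ, Pi.add_apply, Pi.pow_apply]
      ring
    · push_cast
      rw [show ν + ((n : ℝ) + 1) = ν + n + 1 by ring, show ν + (n : ℝ) + 1 + 1 = ν + n + 2 by ring]
      ring

theorem continuousOn_besselSqSum {ν : ℝ} (hν : 0 < ν) (n : ℕ) :
    ContinuousOn (besselSqSum ν n) (Set.Ici 0) := by
  refine ContinuousOn.add ((continuousOn_besselJ hν).pow 2) (continuousOn_const.mul ?_)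
  exact continuousOn_finsetSum _ fun k _ => (continuousOn_besselJ (by positivity)).pow 2

theorem besselSqSum_zero_right {ν : ℝ} (hν : 0 < ν) (n : ℕ) : besselSqSum ν n 0 = 0 := by
  rw [besselSqSum, besselJ_zero_right hν, Finset.sum_eq_zero fun k _ => by
    rw [besselJ_zero_right (by positivity)]; norm_num]
  norm_num

theorem sub_le_sub_of_hasDerivAt_le {f g f' g' : ℝ → ℝ} {a b : ℝ} (hab : a ≤ b)
    (hf : ContinuousOn f (Set.Icc a b)) (hg : ContinuousOn g (Set.Icc a b))
    (hf' : ∀ x ∈ Set.Ioo a b, HasDerivAt f (f' x) x)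
    (hg' : ∀ x ∈ Set.Ioo a b, HasDerivAt g (g' x) x) (h : ∀ x ∈ Set.Ioo a b, f' x ≤ g' x) :
    f b - f a ≤ g b - g a := by
  have hanti : AntitoneOn (f - g) (Set.Icc a b) := by
    refine antitoneOn_of_deriv_nonpos (convex_Icc a b) (hf.sub hg) ?_ ?_ <;> rw [interior_Icc]
    · exact fun x hx => ((hf' x hx).sub (hg' x hx)).differentiableAt.differentiableWithinAt
    · intro x hx
      rw [((hf' x hx).sub (hg' x hx)).deriv]
      linarith [h x hx]
  have := hanti (Set.left_mem_Icc.mpr hab) (Set.right_mem_Icc.mpr hab) hab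
  simp only [Pi.sub_apply] at this
  linarith

theorem two_mul_div_mul_besselJ_sq_le_of_le_one {ν x : ℝ} (hν : 1 / 2 ≤ ν) (hν2 : ν ≤ 3 / 2)
    (hx : 0 < x) (hx1 : x ≤ 1) : 2 * ν / x * besselJ ν x ^ 2 ≤ 24 := by
  have hJ : |besselJ ν x| ≤ 4 * √(x / 2) := by
    refine (abs_besselJ_le_rpow_div_Gamma hν hx).trans ?_
    have hG := half_le_Gamma (y := ν + 1 / 2) (by linarith)
    have hp : (x / 2) ^ ν ≤ √(x / 2) := by
      rw [Real.sqrt_eq_rpow]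
      exact Real.rpow_le_rpow_of_exponent_ge (by positivity) (by linarith) hν
    rw [div_le_iff₀ (by linarith)]
    nlinarith [Real.sqrt_nonneg (x / 2)]
  have hsq : besselJ ν x ^ 2 ≤ 8 * x := by
    rw [← sq_abs]
    calc |besselJ ν x| ^ 2 ≤ (4 * √(x / 2)) ^ 2 := by gcongr
      _ = 8 * x := by rw [mul_pow, Real.sq_sqrt (by positivity)]; ring
  rw [div_mul_eq_mul_div, div_le_iff₀ hx]
  nlinarith

theorem two_mul_div_mul_besselJ_sq_le_of_one_le {ν x : ℝ} (hν : 1 / 2 ≤ ν) (hν2 : ν ≤ 3 / 2)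
    (hx : 1 ≤ x) : 2 * ν / x * besselJ ν x ^ 2 ≤ 6 / x ^ 2 := by
  have hx0 : 0 < x := by linarith
  have hJ : |besselJ ν x| ≤ √(2 / (π * x)) * (7 / 4) := by
    refine (abs_besselJ_le_hankel (by linarith) (by linarith) hx0).trans ?_
    have : max (ν - 1 / 2) 0 * (ν + 1 / 2) * (ν + 3 / 2) / (8 * x ^ 2) ≤ 3 / 4 := by
      rw [max_eq_left (by linarith), div_le_iff₀ (by positivity)]
      calc (ν - 1 / 2) * (ν + 1 / 2) * (ν + 3 / 2)
          ≤ (3 / 2 - 1 / 2) * (3 / 2 + 1 / 2) * (3 / 2 + 3 / 2) := by gcongr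
        _ ≤ 3 / 4 * (8 * x ^ 2) := by nlinarith
    gcongr
    linarith
  have hsq : besselJ ν x ^ 2 ≤ 2 / x := by
    rw [← sq_abs]
    calc |besselJ ν x| ^ 2 ≤ (√(2 / (π * x)) * (7 / 4)) ^ 2 := by gcongr
      _ = 49 / (8 * π) / x := by
        rw [mul_pow, Real.sq_sqrt (by positivity)]
        field_simp
        norm_num
      _ ≤ 2 / x := by
        gcongr
        rw [div_le_iff₀ (by positivity)]
        linarith [pi_gt_d2]
  calc 2 * ν / x * besselJ ν x ^ 2 ≤ 2 * (3 / 2) / x * (2 / x) := by gcongr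
    _ = 6 / x ^ 2 := by field_simp; norm_num

theorem besselSqSum_le {ν X ε : ℝ} (hν : 1 / 2 ≤ ν) (hν2 : ν ≤ 3 / 2) (hX : 1 ≤ X) (n : ℕ)
    (hε : ∀ x, 0 < x → x ≤ X → |besselJ (ν + n) x * besselJ (ν + n + 1) x| ≤ ε) :
    besselSqSum ν n X ≤ 30 + 2 * ε * X := by
  have hν0 : 0 < ν := by linarith
  have hcont := continuousOn_besselSqSum hν0 n
  have h1 := sub_le_sub_of_hasDerivAt_le (f := besselSqSum ν n) (g := fun x => (24 + 2 * ε) * x)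
    (g' := fun _ => (24 + 2 * ε) * 1) zero_le_one
    (hcont.mono Set.Icc_subset_Ici_self) (by fun_prop)
    (fun x hx => hasDerivAt_besselSqSum hν0 hx.1 n)
    (fun x _ => (hasDerivAt_id x).const_mul _) fun x hx => by
      have := two_mul_div_mul_besselJ_sq_le_of_le_one hν hν2 hx.1 hx.2.le
      have := neg_le_of_abs_le (hε x hx.1 (hx.2.le.trans hX))
      linarith
  have h2 := sub_le_sub_of_hasDerivAt_le (f := besselSqSum ν n)
    (g := fun x => 2 * ε * x - 6 * x⁻¹) (g' := fun x => 2 * ε * 1 - 6 * (-(x ^ 2)⁻¹)) hX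
    (hcont.mono fun x hx => zero_le_one.trans hx.1)
    (ContinuousOn.sub (by fun_prop) (continuousOn_const.mul
      (continuousOn_id.inv₀ fun x hx => (zero_lt_one.trans_le hx.1).ne')))
    (fun x hx => hasDerivAt_besselSqSum hν0 (zero_lt_one.trans hx.1) n)
    (fun x hx => ((hasDerivAt_id x).const_mul _).sub
      ((hasDerivAt_inv (zero_lt_one.trans hx.1).ne').const_mul 6)) fun x hx => by
      have := two_mul_div_mul_besselJ_sq_le_of_one_le hν hν2 hx.1.le
      have := neg_le_of_abs_le (hε x (zero_lt_one.trans hx.1) hx.2.le)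
      rw [div_eq_mul_inv (6 : ℝ)] at *
      linarith
  have hinv : 0 < X⁻¹ := by positivity
  rw [besselSqSum_zero_right hν0] at h1
  norm_num at h1 h2
  linarith

theorem abs_besselJ_mul_besselJ_le {ν x X : ℝ} (hν : 1 / 2 ≤ ν) (hx : 0 < x) (hxX : x ≤ X)
    (n : ℕ) : |besselJ (ν + n) x * besselJ (ν + n + 1) x| ≤
      16 * (X / 2) ^ (2 * ν + 1) * (((X / 2) ^ 2) ^ n / n.factorial) := by
  have hX : 0 < X := hx.trans_le hxX
  have hn : (0 : ℝ) ≤ n := n.cast_nonneg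
  have h1 := abs_besselJ_le_rpow_div_Gamma (α := ν + n) (by linarith) hx
  have h2 := abs_besselJ_le_rpow_div_Gamma (α := ν + n + 1) (by linarith) hx
  have hG1 : (n.factorial : ℝ) / 2 ≤ Gamma (ν + n + 1 / 2) := by
    rcases Nat.eq_zero_or_pos n with rfl | hpos
    · simpa using half_le_Gamma (y := ν + 1 / 2) (by linarith)
    · have hpos' : (1 : ℝ) ≤ n := by exact_mod_cast hpos
      have := Real.Gamma_strictMonoOn_Ici.monotoneOn (a := (n : ℝ) + 1) (b := ν + n + 1 / 2)
        (by simp only [Set.mem_Ici]; linarith) (by simp only [Set.mem_Ici]; linarith) (by linarith)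
      rw [Real.Gamma_nat_eq_factorial] at this
      have hf : (0 : ℝ) < n.factorial := by positivity
      linarith
  have hG2 := half_le_Gamma (y := ν + n + 1 + 1 / 2) (by linarith)
  have hf : (0 : ℝ) < n.factorial := by positivity
  rw [abs_mul]
  calc _ ≤ 2 * (x / 2) ^ (ν + n) / Gamma (ν + n + 1 / 2) *
        (2 * (x / 2) ^ (ν + n + 1) / Gamma (ν + n + 1 + 1 / 2)) := by
          gcongr
    _ ≤ 2 * (X / 2) ^ (ν + n) / (n.factorial / 2) * (2 * (X / 2) ^ (ν + n + 1) / (1 / 2)) := by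
          gcongr
    _ = _ := by
          have : (X / 2) ^ (ν + n) * (X / 2) ^ (ν + n + 1) =
              (X / 2) ^ (2 * ν + 1) * ((X / 2) ^ 2) ^ n := by
            rw [← pow_mul, ← Real.rpow_natCast, ← Real.rpow_add (by positivity),
              ← Real.rpow_add (by positivity)]
            congr 1
            push_cast
            ring
          rw [mul_assoc 16, ← mul_div_assoc ((X / 2) ^ (2 * ν + 1)), ← this]
          field_simp
          norm_num

theorem besselJ_add_nat_sq_le {ν X : ℝ} (hν : 1 / 2 ≤ ν) (hν2 : ν ≤ 3 / 2) (hX : 1 ≤ X) (m : ℕ) :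
    besselJ (ν + m + 1) X ^ 2 ≤ 15 := by
  have hlim := ((((FloorSemiring.tendsto_pow_div_factorial_atTop ((X / 2) ^ 2)).const_mul
    (16 * (X / 2) ^ (2 * ν + 1))).const_mul 2).mul_const X).const_add 30
  rw [mul_zero, mul_zero, zero_mul, add_zero] at hlim
  have hle : 2 * besselJ (ν + m + 1) X ^ 2 ≤ 30 := by
    refine ge_of_tendsto hlim ?_
    filter_upwards [Filter.eventually_gt_atTop m] with n hn
    refine le_trans ?_ (besselSqSum_le hν hν2 hX n
      fun x hx hxX => abs_besselJ_mul_besselJ_le hν hx hxX n)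
    have := Finset.single_le_sum (f := fun k : ℕ => besselJ (ν + k + 1) X ^ 2)
      (fun k _ => sq_nonneg _) (Finset.mem_range.mpr hn)
    rw [besselSqSum]
    nlinarith [sq_nonneg (besselJ ν X)]
  linarith

theorem besselJ_bound (α : ℝ) (hα : -(1 / 2 : ℝ) ≤ α) (x : ℝ) (hx : 1 ≤ x) :
    |besselJ α x| ≤ (4 / 5) * |α ^ 2 - 1 / 4| + Real.sqrt (2 / (π * x)) := by
  rcases hα.eq_or_lt with rfl | hα
  · rw [besselJ_neg_half (by linarith), abs_mul, abs_of_nonneg (Real.sqrt_nonneg _)]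
    refine (mul_le_of_le_one_right (Real.sqrt_nonneg _) (abs_cos_le_one x)).trans ?_
    exact le_add_of_nonneg_left (by positivity)
  rcases le_total α (5 / 2) with h | h
  · exact abs_besselJ_le_of_le_five_halves hα h hx
  obtain ⟨m, hm⟩ : ∃ m : ℕ, m = ⌊α - 3 / 2⌋₊ := ⟨_, rfl⟩
  have h1 := Nat.floor_le (show 0 ≤ α - 3 / 2 by linarith)
  have h2 := Nat.lt_floor_add_one (α - 3 / 2)
  rw [← hm] at h1 h2
  have hsq := besselJ_add_nat_sq_le (ν := α - m - 1) (by linarith) (by linarith) hx m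
  rw [show α - m - 1 + m + 1 = α by ring] at hsq
  have h4 : |besselJ α x| ≤ 4 := abs_le_of_sq_le_sq (by linarith) (by norm_num)
  rw [abs_of_nonneg (by nlinarith : 0 ≤ α ^ 2 - 1 / 4)]
  nlinarith [Real.sqrt_nonneg (2 / (π * x))]
end
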